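/- Let p be an odd prime and λ ∈ ℤ_p with λ ≢ 0 (mod p) and λ ≢ 1 (mod p). Let L_λ over 𝔽_p be the Legendre curve y² = x(x−1)(x−λ̄), where λ̄ is the reduction of λ modulo p, let A = p + 1 − #L_λ(𝔽_p), and suppose p ∤ A. Let β ∈ ℤ_p be a p-adic unit with β² − A·β + p = 0. Then for every integer s ≥ 1, Σ_{j=0}^{(p^s−1)/2} C((p^s−1)/2, j)² λ^j ≡ (−1)^{(p−1)/2} · β · Σ_{j=0}^{(p^{s−1}−1)/2} C((p^{s−1}−1)/2, j)² λ^j (mod p^s ℤ_p). -/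

import Mathlib

open Finset

/-- `1` plus the number of affine points of the Legendre curve
`y² = x(x−1)(x−λ̄)` over `𝔽_p`. -/
noncomputable def LCount (p : ℕ) [Fact p.Prime] (lam : ℤ_[p]) : ℕ :=
  1 + (Finset.univ.filter (fun v : ZMod p × ZMod p =>
        v.2 ^ 2 = v.1 * (v.1 - 1) * (v.1 - PadicInt.toZMod lam))).card

/-!
Put `F = (1 + X) * (1 + lam * X)`. The sum attached to `s` is the coefficient of `X ^ m` in `F ^ m`
for `m = (p ^ s - 1) / 2`, and `F ^ m` is `p`-adically close to `F ^ (-1 / 2)`. Dwork's Frobenius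
operator `U`, a Cartier operator composed with multiplication by a power of `F`, acts on a lattice
of functions with bounded poles along `F`, the part with poles of order `m` being scaled by the
falling factorials of `-1 / 2`. With this scaling every pole that survives `U` carries a factor `p`,
so `U` has rank one modulo `p`. The coefficient functionals `T s` satisfy `T (s + 1) ≡ T s ∘ U`
modulo `p ^ (s + 1)`, and `U` has a left eigenvector to any `p`-adic precision, so consecutive
coefficients have ratio the eigenvalue `α` of `U`.

Modulo `p ^ r` the trace of `U ^ r` is `α ^ r`. Summing over the Teichmüller lifts of the field with
`p ^ r` elements, this trace is also a quadratic character sum over that field, hence a power sum of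
the reciprocal zeros of the `L`-function of the character `g ↦ χ (g 0 * g 1 * g lam)` on monic
polynomials. Adding multiples of `X * (X - 1)` to `g` only changes the value of `g` at `lam`, so the
coefficients of the `L`-function vanish from degree `3` on, and it is a quadratic polynomial whose
reciprocal zeros are, up to the sign `(-1) ^ ((p - 1) / 2)`, the roots `β` and `p / β` of the
Frobenius polynomial of the curve. As `p ∣ p / β`, the unit `α` is `β` up to that sign.
-/

open Polynomial

section DworkCongruence

variable {R W : Type*} [CommRing R] [AddCommGroup W] [Module R W] {π : R} {U : W →ₗ[R] W} {w₀ : W}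

theorem dvd_trace_sub [Module.Free R W] [Module.Finite R W] {V : W →ₗ[R] W}
    {ψ : W →ₗ[R] R} {u : W} {c : R} (hV : ∀ w, ∃ w', V w = ψ w • u + c • w') :
    c ∣ LinearMap.trace R W V - ψ u := by
  choose v hv using hV
  let b := Module.Free.chooseBasis R W
  have hsum : V = ψ.smulRight u + c • b.constr R fun i => v (b i) := b.ext fun i => by simp [hv]
  exact ⟨LinearMap.trace R W (b.constr R fun i => v (b i)), by
    rw [hsum, map_add, map_smul, LinearMap.trace_smulRight, add_sub_cancel_left, smul_eq_mul]⟩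

/-- `U` has rank at most one modulo `π`, its image modulo `π` being spanned by `w₀`. -/
def IsRankOneMod (π : R) (U : W →ₗ[R] W) (w₀ : W) : Prop :=
  ∀ w, ∃ (a : R) (w' : W), U w = a • w₀ + π • w'

/-- The functional `φ`, normalised by `φ w₀ = 1`, is a left eigenvector of `U` modulo `c`; its
eigenvalue is then `φ (U w₀)`. -/
structure IsLeftEigenvectorMod (c : R) (U : W →ₗ[R] W) (w₀ : W) (φ : W →ₗ[R] R) : Prop where
  apply_eq_one : φ w₀ = 1
  dvd_sub : ∀ w, c ∣ φ (U w) - φ (U w₀) * φ w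

theorem dvd_apply_sub_apply (hU : IsRankOneMod π U w₀) {φ τ : W →ₗ[R] R} (hφ : φ w₀ = 1)
    (hτ : τ w₀ = 1) (w : W) : π ∣ φ (U w) - τ (U w) := by
  obtain ⟨a, w', hw⟩ := hU w
  exact ⟨φ w' - τ w', by simp only [hw, map_add, map_smul, hφ, hτ, smul_eq_mul]; ring⟩

theorem dvd_trace_sub_apply [Module.Free R W] [Module.Finite R W] (hU : IsRankOneMod π U w₀)
    {τ : W →ₗ[R] R} (hτ : τ w₀ = 1) : π ∣ LinearMap.trace R W U - τ (U w₀) := by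
  refine dvd_trace_sub (ψ := τ ∘ₗ U) fun w => ?_
  obtain ⟨a, w', hw⟩ := hU w
  refine ⟨w' - τ w' • w₀, ?_⟩
  simp only [LinearMap.comp_apply, hw, map_add, map_smul, hτ, smul_eq_mul]
  module

theorem isUnit_of_dvd_sub [IsLocalRing R] (hπ : ¬ IsUnit π) {x y : R} (hx : IsUnit x)
    (h : π ∣ y - x) : IsUnit y := by
  refine (IsLocalRing.isUnit_or_isUnit_of_isUnit_add (a := y) (b := x - y) (by simpa)).resolve_right
    fun hu => hπ (isUnit_of_dvd_unit h ?_)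
  simpa using hu.neg

/-- An endomorphism of rank one modulo `π` acts on a quotient line with a unit eigenvalue; iterating
`φ ↦ (φ (U w₀))⁻¹ φ ∘ U` lifts this line to any precision. -/
theorem exists_approx_left_eigenvector [IsLocalRing R] (hπ : ¬ IsUnit π)
    (hU : IsRankOneMod π U w₀) {τ : W →ₗ[R] R} (hτ : τ w₀ = 1) (hτU : IsUnit (τ (U w₀))) (N : ℕ) :
    ∃ φ : W →ₗ[R] R, IsLeftEigenvectorMod (π ^ N) U w₀ φ := by
  induction N with
  | zero => exact ⟨τ, hτ, by simp⟩
  | succ N ih =>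
    obtain ⟨φ, hφ⟩ := ih
    obtain ⟨e, he⟩ : ∃ e, e * φ (U w₀) = 1 :=
      (isUnit_of_dvd_sub hπ hτU (dvd_apply_sub_apply hU hφ.apply_eq_one hτ w₀)).exists_left_inv
    have hstep (w : W) : π ^ (N + 1) ∣ φ (U (U w)) - φ (U w₀) * φ (U w) := by
      obtain ⟨a, w', hw⟩ := hU w
      obtain ⟨t, ht⟩ := hφ.dvd_sub w'
      refine ⟨t, ?_⟩
      simp only [hw, map_add, map_smul, hφ.apply_eq_one, smul_eq_mul]
      linear_combination π * ht
    refine ⟨e • φ ∘ₗ U, he, fun w => ?_⟩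
    obtain ⟨t, ht⟩ := hstep w
    obtain ⟨t₀, ht₀⟩ := hstep w₀
    refine ⟨e * t - e ^ 2 * φ (U w) * t₀, ?_⟩
    simp only [LinearMap.smul_apply, LinearMap.comp_apply, smul_eq_mul]
    linear_combination e * ht - e ^ 2 * φ (U w) * ht₀ - e * φ (U w) * φ (U w₀) * he

section LeftEigenvector

variable {φ : W →ₗ[R] R} {N : ℕ}

theorem exists_apply_eq_smul_of_pow_dvd (hU : IsRankOneMod π U w₀)
    (hφ : IsLeftEigenvectorMod (π ^ N) U w₀ φ) {j : ℕ} (hj : j + 1 ≤ N) {w : W}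
    (hw : π ^ (j + 1) ∣ φ w) : ∃ w', U w = π • w' ∧ π ^ j ∣ φ w' := by
  obtain ⟨a, v, hv⟩ := hU w
  obtain ⟨t, ht⟩ : π ^ (j + 1) ∣ φ (U w) :=
    (dvd_iff_dvd_of_dvd_sub ((pow_dvd_pow π hj).trans (hφ.dvd_sub w))).2 (hw.mul_left _)
  have ha : a + π * φ v = π ^ (j + 1) * t := by
    rw [← ht, hv, map_add, map_smul, map_smul, hφ.apply_eq_one, smul_eq_mul, smul_eq_mul, mul_one]
  refine ⟨(π ^ j * t - φ v) • w₀ + v, ?_, t, by simp [hφ.apply_eq_one]⟩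
  rw [hv, eq_sub_of_add_eq ha]
  module

theorem exists_pow_apply_eq_smul_of_pow_dvd (hU : IsRankOneMod π U w₀)
    (hφ : IsLeftEigenvectorMod (π ^ N) U w₀ φ) {r : ℕ} (hr : r ≤ N) {w : W} (hw : π ^ r ∣ φ w) :
    ∃ w', (U ^ r) w = π ^ r • w' := by
  induction r generalizing w with
  | zero => exact ⟨w, by simp⟩
  | succ r ih =>
    obtain ⟨v, hv, hφv⟩ := exists_apply_eq_smul_of_pow_dvd hU hφ hr hw
    obtain ⟨w', hw'⟩ := ih (Nat.le_of_succ_le hr) hφv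
    exact ⟨w', by rw [pow_succ, Module.End.mul_apply, hv, map_smul, hw', smul_smul, pow_succ']⟩

theorem pow_dvd_apply_pow_sub (hφ : IsLeftEigenvectorMod (π ^ N) U w₀ φ) (r : ℕ) :
    π ^ N ∣ φ ((U ^ r) w₀) - φ (U w₀) ^ r := by
  induction r with
  | zero => simp [hφ.apply_eq_one]
  | succ r ih =>
    rw [pow_succ', Module.End.mul_apply]
    convert dvd_add (hφ.dvd_sub ((U ^ r) w₀)) (ih.mul_left (φ (U w₀))) using 1
    ring

theorem pow_dvd_trace_pow_sub [Module.Free R W] [Module.Finite R W]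
    (hU : IsRankOneMod π U w₀) (hφ : IsLeftEigenvectorMod (π ^ N) U w₀ φ) {r : ℕ} (hr : r ≤ N) :
    π ^ r ∣ LinearMap.trace R W (U ^ r) - φ (U w₀) ^ r := by
  have hV (w : W) : ∃ w', (U ^ r) w = φ w • (U ^ r) w₀ + π ^ r • w' := by
    obtain ⟨w', hw'⟩ := exists_pow_apply_eq_smul_of_pow_dvd hU hφ hr
      (w := w - φ w • w₀) (by simp [hφ.apply_eq_one])
    exact ⟨w', by rw [← hw', map_sub, map_smul, add_sub_cancel]⟩
  convert dvd_add (dvd_trace_sub hV) ((pow_dvd_pow π hr).trans (pow_dvd_apply_pow_sub hφ r))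
    using 1
  ring

theorem pow_dvd_apply_of_pow_dvd (hU : IsRankOneMod π U w₀)
    (hφ : IsLeftEigenvectorMod (π ^ N) U w₀ φ) {T : ℕ → W →ₗ[R] R} {s : ℕ}
    (hT : ∀ i < s, ∀ w, π ^ (i + 1) ∣ T (i + 1) w - T i (U w)) (hs : s ≤ N) {w : W}
    (hw : π ^ s ∣ φ w) : π ^ s ∣ T s w := by
  induction s generalizing w with
  | zero => simp
  | succ s ih =>
    obtain ⟨v, hv, hφv⟩ := exists_apply_eq_smul_of_pow_dvd hU hφ hs hw
    refine (dvd_iff_dvd_of_dvd_sub (hT s (Nat.lt_succ_self s) w)).2 ?_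
    rw [hv, map_smul, smul_eq_mul, pow_succ']
    exact mul_dvd_mul_left _ (ih (fun i hi => hT i (hi.trans (Nat.lt_succ_self s)))
      (Nat.le_of_succ_le hs) hφv)

end LeftEigenvector

theorem pow_dvd_sub_of_pow_dvd_pow_sub {α β : R} (hβ : IsUnit β) {m : ℕ}
    (h₁ : π ^ m ∣ α ^ m - β ^ m) (h₂ : π ^ (m + 1) ∣ α ^ (m + 1) - β ^ (m + 1)) :
    π ^ m ∣ α - β := by
  refine ((hβ.pow m).dvd_mul_left).1 ?_
  convert dvd_sub ((pow_dvd_pow π (Nat.le_succ m)).trans h₂) (h₁.mul_left α) using 1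
  ring

theorem dwork_congr_of_trace [IsLocalRing R] [Module.Free R W] [Module.Finite R W]
    (hπ : ¬ IsUnit π) (hU : IsRankOneMod π U w₀) {T : ℕ → W →ₗ[R] R} {n : ℕ}
    (hT : ∀ s ≤ n, ∀ w, π ^ (s + 1) ∣ T (s + 1) w - T s (U w))
    (hT₀ : T 0 w₀ = 1) {β : R} (hβ : IsUnit β)
    (htr : ∀ r, 1 ≤ r → r ≤ n + 2 → π ^ r ∣ LinearMap.trace R W (U ^ r) - β ^ r) :
    π ^ (n + 1) ∣ T (n + 1) w₀ - β * T n w₀ := by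
  have hunit : IsUnit (T 0 (U w₀)) := by
    have h := dvd_sub (htr 1 le_rfl (by omega)) (by simpa using dvd_trace_sub_apply hU hT₀)
    exact isUnit_of_dvd_sub hπ hβ (by simpa using h)
  obtain ⟨φ, hφ⟩ := exists_approx_left_eigenvector hπ hU hT₀ hunit (n + 2)
  have hpow (r : ℕ) (h1 : 1 ≤ r) (hr : r ≤ n + 2) : π ^ r ∣ φ (U w₀) ^ r - β ^ r := by
    simpa using dvd_sub (htr r h1 hr) (pow_dvd_trace_pow_sub hU hφ hr)
  have hα : π ^ (n + 1) ∣ φ (U w₀) - β :=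
    pow_dvd_sub_of_pow_dvd_pow_sub hβ (hpow _ (by omega) (by omega)) (hpow _ (by omega) le_rfl)
  obtain ⟨c, v, hv⟩ := hU w₀
  have hker : π ^ n ∣ T n (v - φ v • w₀) :=
    pow_dvd_apply_of_pow_dvd hU hφ (fun s hs => hT s hs.le) (by omega) (by simp [hφ.apply_eq_one])
  have hsplit : U w₀ = φ (U w₀) • w₀ + π • (v - φ v • w₀) := by
    simp only [hv, map_add, map_smul, hφ.apply_eq_one, smul_eq_mul]
    module
  have hTU := congrArg (T n) hsplit
  rw [map_add, map_smul, map_smul, smul_eq_mul, smul_eq_mul] at hTU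
  convert dvd_add (hT n le_rfl w₀)
    (dvd_add (hα.mul_right (T n w₀)) (pow_succ' π n ▸ mul_dvd_mul_left π hker)) using 1
  linear_combination hTU

end DworkCongruence

section Cartier

variable {R : Type*} [CommRing R]

/-- The Cartier-type operator `X ^ (q * j + (q - 1) / 2) ↦ X ^ j`, which kills the other monomials.
It is the classical operator `x ^ i ↦ x ^ (i / q)` on half-integral exponents, shifted by
`1 / 2`. -/
noncomputable def cartier (q : ℕ) : R[X] →ₗ[R] R[X] :=
  lsum fun i => if i % q = (q - 1) / 2 then monomial (i / q) else 0

theorem cartier_monomial (q i : ℕ) (c : R) :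
    cartier q (monomial i c) = if i % q = (q - 1) / 2 then monomial (i / q) c else 0 := by
  rw [cartier, lsum_apply, sum_monomial_index c _ (LinearMap.map_zero _)]
  split_ifs <;> rfl

theorem coeff_cartier {q : ℕ} (hq : 0 < q) (f : R[X]) (j : ℕ) :
    (cartier q f).coeff j = f.coeff (q * j + (q - 1) / 2) := by
  induction f using Polynomial.induction_on' with
  | add f g hf hg => rw [map_add, coeff_add, coeff_add, hf, hg]
  | monomial i c =>
    have hiff : i = q * j + (q - 1) / 2 ↔ i / q = j ∧ i % q = (q - 1) / 2 := by
      rw [Nat.div_mod_unique hq, add_comm, eq_comm]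
      exact (and_iff_left (by omega)).symm
    rw [cartier_monomial, coeff_monomial, apply_ite (coeff · j), coeff_monomial, coeff_zero]
    simp only [hiff, ← ite_and, and_comm]

theorem natDegree_cartier_le {q : ℕ} (hq : 0 < q) {f : R[X]} {D : ℕ}
    (hf : f.natDegree < q * (D + 1) + (q - 1) / 2) : (cartier q f).natDegree ≤ D := by
  rw [natDegree_le_iff_coeff_eq_zero]
  intro j hj
  rw [coeff_cartier hq]
  exact coeff_eq_zero_of_natDegree_lt (hf.trans_le (by gcongr; exact hj))

theorem cartier_expand_mul {q : ℕ} (hq : 0 < q) (a f : R[X]) :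
    cartier q (expand R q a * f) = a * cartier q f := by
  induction a using Polynomial.induction_on' with
  | add a b ha hb => rw [map_add, add_mul, map_add, ha, hb, add_mul]
  | monomial n c =>
    induction f using Polynomial.induction_on' with
    | add f g hf hg => rw [mul_add, map_add, hf, hg, map_add, mul_add]
    | monomial i d =>
      rw [expand_monomial, monomial_mul_monomial, cartier_monomial, cartier_monomial, mul_comm n q,
        Nat.mul_add_mod_self_left, Nat.mul_add_div hq, mul_ite,
        monomial_mul_monomial, mul_zero]

theorem cartier_cartier {q r : ℕ} (hq : Odd q) (hr : Odd r) (f : R[X]) :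
    cartier r (cartier q f) = cartier (r * q) f := by
  ext j
  obtain ⟨a, rfl⟩ := hq
  obtain ⟨b, rfl⟩ := hr
  have hhalf : ((2 * b + 1) * (2 * a + 1) - 1) / 2 = (2 * a + 1) * b + a := by
    rw [show (2 * b + 1) * (2 * a + 1) = 2 * ((2 * a + 1) * b + a) + 1 by ring]
    omega
  rw [coeff_cartier (by omega), coeff_cartier (by omega), coeff_cartier (by positivity), hhalf,
    Nat.add_sub_cancel, Nat.add_sub_cancel, Nat.mul_div_cancel_left _ two_pos,
    Nat.mul_div_cancel_left _ two_pos]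
  ring_nf

/-- The operator `f ↦ cartier q (H * f)`, a truncation of Dwork's Frobenius operator. -/
noncomputable def twistedCartier (q : ℕ) (H : R[X]) : R[X] →ₗ[R] R[X] :=
  cartier q ∘ₗ LinearMap.mulLeft R H

theorem twistedCartier_apply (q : ℕ) (H f : R[X]) :
    twistedCartier q H f = cartier q (H * f) := rfl

theorem twistedCartier_pow {q : ℕ} (hq : Odd q) (H : R[X]) (r : ℕ) (f : R[X]) :
    (twistedCartier q H ^ r) f =
      cartier (q ^ r) ((∏ i ∈ range r, expand R (q ^ i) H) * f) := by
  induction r generalizing f with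
  | zero => ext j; simp [coeff_cartier]
  | succ r ih =>
    rw [pow_succ, Module.End.mul_apply, ih, twistedCartier_apply, ← cartier_expand_mul hq.pos,
      cartier_cartier hq hq.pow, prod_range_succ', ← mul_assoc, map_prod, pow_succ]
    simp [expand_expand, pow_succ']

theorem cartier_pow_mul {q : ℕ} (hq : 0 < q) {F g : R[X]} {π : R}
    (hg : F ^ q = expand R q F + C π * g) (K : ℕ) (B : R[X]) :
    cartier q (F ^ (q * K) * B) = ∑ i ∈ range (K + 1),
      C (K.choose i * π ^ i) * (cartier q (g ^ i * B) * F ^ (K - i)) := by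
  have hpow : F ^ (q * K) * B = ∑ i ∈ range (K + 1),
      (K.choose i * π ^ i) • (expand R q (F ^ (K - i)) * (g ^ i * B)) := by
    rw [pow_mul, hg, add_comm, add_pow, sum_mul]
    refine sum_congr rfl fun i _ => ?_
    simp only [smul_eq_C_mul, map_mul, map_pow, map_natCast]
    ring
  rw [hpow, map_sum]
  refine sum_congr rfl fun i _ => ?_
  rw [map_smul, cartier_expand_mul hq, smul_eq_C_mul, mul_comm (F ^ _)]

end Cartier

section PoleLattice

variable {R : Type*} [CommRing R]

/-- After division by `F ^ k`, the span of the functions `k (k - 1) ⋯ (k - m + 1) * A / F ^ m` which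
are regular away from the zeros of `F`, infinity included. The falling factorials are the
factors that appear when `F ^ k` is differentiated. -/
noncomputable def poleLattice (F : R[X]) (k : ℕ) : Submodule R R[X] :=
  Submodule.span R {w | ∃ (m : ℕ) (A : R[X]), m ≤ k ∧ A.natDegree ≤ m * F.natDegree ∧
    w = C (k.descFactorial m : R) * (A * F ^ (k - m))}

theorem mem_poleLattice {F : R[X]} {k m : ℕ} (hm : m ≤ k) {A : R[X]}
    (hA : A.natDegree ≤ m * F.natDegree) :
    C (k.descFactorial m : R) * (A * F ^ (k - m)) ∈ poleLattice F k :=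
  Submodule.subset_span ⟨m, A, hm, hA, rfl⟩

theorem pow_mem_poleLattice (F : R[X]) (k : ℕ) : F ^ k ∈ poleLattice F k := by
  simpa using mem_poleLattice (F := F) (k := k) (m := 0) (A := 1) (by simp) (by simp)

theorem mem_degreeLT_succ_iff {n : ℕ} {f : R[X]} : f ∈ degreeLT R (n + 1) ↔ f.natDegree ≤ n := by
  rw [mem_degreeLT, degree_lt_iff_coeff_zero, natDegree_le_iff_coeff_eq_zero]
  rfl

theorem poleLattice_le_degreeLT (F : R[X]) (k : ℕ) :
    poleLattice F k ≤ degreeLT R (k * F.natDegree + 1) := by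
  refine Submodule.span_le.2 ?_
  rintro _ ⟨m, A, hm, hA, rfl⟩
  rw [SetLike.mem_coe, mem_degreeLT_succ_iff]
  calc (C (k.descFactorial m : R) * (A * F ^ (k - m))).natDegree
      ≤ (A * F ^ (k - m)).natDegree := natDegree_C_mul_le _ _
    _ ≤ m * F.natDegree + (k - m) * F.natDegree := natDegree_mul_le_of_le hA natDegree_pow_le
    _ = k * F.natDegree := by rw [← add_mul, Nat.add_sub_cancel' hm]

theorem factorial_smul_mem_poleLattice {F : R[X]} {k : ℕ} {f : R[X]}
    (hf : f ∈ degreeLT R (k * F.natDegree + 1)) : (k.factorial : R) • f ∈ poleLattice F k := by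
  simpa [smul_eq_C_mul, Nat.descFactorial_self] using
    mem_poleLattice le_rfl (mem_degreeLT_succ_iff.1 hf)

theorem mem_degreeLT_of_smul_mem [IsDomain R] {e : R} (he : e ≠ 0) {n : ℕ} {f : R[X]}
    (hf : e • f ∈ degreeLT R n) : f ∈ degreeLT R n := by
  rwa [mem_degreeLT, degree_smul_of_smul_regular _ (IsSMulRegular.of_ne_zero he),
    ← mem_degreeLT] at hf

section Trace

theorem trace_eq_of_intertwine {V W : Type*} [IsDomain R] [AddCommGroup V] [Module R V]
    [Module.Free R V] [Module.Finite R V] [AddCommGroup W] [Module R W] [Module.Free R W]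
    [Module.Finite R W] {i : W →ₗ[R] V} {κ : V →ₗ[R] W} {e : R} (he : e ≠ 0)
    (hiκ : i ∘ₗ κ = e • LinearMap.id) (hκi : κ ∘ₗ i = e • LinearMap.id)
    {u : W →ₗ[R] W} {v : V →ₗ[R] V} (huv : i ∘ₗ u = v ∘ₗ i) :
    LinearMap.trace R W u = LinearMap.trace R V v := by
  refine mul_left_cancel₀ he ?_
  have htr : LinearMap.trace R W (u ∘ₗ (κ ∘ₗ i)) = LinearMap.trace R V ((v ∘ₗ i) ∘ₗ κ) := by
    rw [← huv, ← LinearMap.comp_assoc, LinearMap.trace_comp_comm', LinearMap.comp_assoc]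
  rw [hκi, LinearMap.comp_assoc, hiκ] at htr
  simpa [LinearMap.comp_smul] using htr

theorem trace_restrict_degreeLT {D : ℕ} (u : R[X] →ₗ[R] R[X])
    (hu : ∀ f ∈ degreeLT R D, u f ∈ degreeLT R D) :
    LinearMap.trace R (degreeLT R D) (u.restrict hu) = ∑ j ∈ range D, (u (X ^ j)).coeff j := by
  rw [LinearMap.trace_eq_matrix_trace R (degreeLT.basis R D), Matrix.trace, Finset.sum_range]
  refine sum_congr rfl fun i _ => ?_
  rw [Matrix.diag_apply, LinearMap.toMatrix_apply, degreeLT.basis_repr,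
    LinearMap.coe_restrict_apply, degreeLT.basis_val]

instance finite_poleLattice [IsNoetherianRing R] (F : R[X]) (k : ℕ) :
    Module.Finite R (poleLattice F k) := by
  have := Module.Finite.of_basis (degreeLT.basis R (k * F.natDegree + 1))
  exact Module.Finite.of_injective (Submodule.inclusion (poleLattice_le_degreeLT F k))
    (Submodule.inclusion_injective _)

theorem trace_restrict_poleLattice [IsDomain R] [CharZero R] [IsPrincipalIdealRing R] {F : R[X]}
    {k : ℕ} (u : R[X] →ₗ[R] R[X]) (hu : ∀ w ∈ poleLattice F k, u w ∈ poleLattice F k) :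
    LinearMap.trace R (poleLattice F k) (u.restrict hu) =
      ∑ j ∈ range (k * F.natDegree + 1), (u (X ^ j)).coeff j := by
  have hk : (k.factorial : R) ≠ 0 := Nat.cast_ne_zero.2 k.factorial_ne_zero
  have hle := poleLattice_le_degreeLT F k
  have hu' : ∀ f ∈ degreeLT R (k * F.natDegree + 1), u f ∈ degreeLT R (k * F.natDegree + 1) :=
    fun f hf => mem_degreeLT_of_smul_mem hk
      (map_smul u _ f ▸ hle (hu _ (factorial_smul_mem_poleLattice hf)))
  have := Module.Finite.of_basis (degreeLT.basis R (k * F.natDegree + 1))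
  have := Module.Free.of_basis (degreeLT.basis R (k * F.natDegree + 1))
  rw [← trace_restrict_degreeLT u hu']
  exact trace_eq_of_intertwine (i := Submodule.inclusion hle)
    (κ := ((k.factorial : R) • LinearMap.id (M := R[X])).restrict fun _ hf =>
      factorial_smul_mem_poleLattice hf) hk rfl rfl rfl

end Trace

section RankOne

open scoped Pointwise

variable {p : ℕ} [Fact p.Prime]

theorem exists_pow_eq_expand_add (F : ℤ_[p][X]) :
    ∃ g : ℤ_[p][X], F ^ p = expand _ p F + C (p : ℤ_[p]) * g ∧
      g.natDegree ≤ p * F.natDegree := by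
  have hp0 : (p : ℤ_[p]) ≠ 0 := PadicInt.prime_p.ne_zero
  obtain ⟨g, hg⟩ : C (p : ℤ_[p]) ∣ F ^ p - expand _ p F := by
    rw [C_dvd_iff_dvd_coeff]
    intro i
    rw [← Ideal.mem_span_singleton, ← PadicInt.maximalIdeal_eq_span_p, ← PadicInt.ker_toZMod,
      RingHom.mem_ker, ← coeff_map, Polynomial.map_sub, Polynomial.map_pow, map_expand,
      ZMod.expand_card, sub_self, coeff_zero]
  refine ⟨g, by rw [← hg]; ring, ?_⟩
  rw [← natDegree_C_mul hp0, ← hg]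
  refine (natDegree_sub_le _ _).trans (max_le natDegree_pow_le ?_)
  rw [natDegree_expand, mul_comm]

theorem exists_pow_eq_factorial_mul {i : ℕ} (hi : i ≠ 0) :
    ∃ t : ℤ_[p], (p : ℤ_[p]) ^ i = i.factorial * p * t := by
  obtain ⟨v, m, hm, h⟩ := Nat.exists_eq_pow_mul_and_not_dvd i.factorial_ne_zero p
    (Fact.out : p.Prime).ne_one
  have hlt : v < i := ((padicValNat_dvd_iff_le i.factorial_ne_zero).1 ⟨m, h⟩).trans_lt
    (padicValNat_factorial_lt_of_ne_zero p hi)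
  obtain ⟨c, rfl⟩ := Nat.exists_eq_add_of_lt hlt
  have hunit : IsUnit (m : ℤ_[p]) := by
    rw [PadicInt.isUnit_iff, PadicInt.norm_natCast_eq_one_iff]
    exact (Nat.Prime.coprime_iff_not_dvd Fact.out).2 hm
  obtain ⟨t, ht⟩ := hunit.exists_right_inv
  refine ⟨t * p ^ c, ?_⟩
  rw [h]
  push_cast
  linear_combination (-(p : ℤ_[p]) ^ (v + c + 1)) * ht

/-- Since `p ^ i / i !` is divisible by `p`, a pole of order `m' + i` with coefficient `p ^ i`
contributes only multiples of `p`. -/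
theorem pow_mul_mem_smul_poleLattice {F B : ℤ_[p][X]} {k m m' i : ℕ} (hm : m' ≤ m) (hi : i ≠ 0)
    (hik : m' + i ≤ k) (hB : B.natDegree ≤ (m' + i) * F.natDegree) :
    C (k.descFactorial m * ((k - m').choose i * (p : ℤ_[p]) ^ i)) * (B * F ^ (k - m' - i)) ∈
      (p : ℤ_[p]) • poleLattice F k := by
  obtain ⟨t, ht⟩ := exists_pow_eq_factorial_mul (p := p) hi
  refine Submodule.mem_smul_pointwise_iff_exists _ _ _ |>.2
    ⟨_, Submodule.smul_mem _ ((k - m').descFactorial (m - m') * t) (mem_poleLattice hik hB), ?_⟩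
  have hm' : k.descFactorial m = (k - m').descFactorial (m - m') * k.descFactorial m' :=
    (Nat.descFactorial_mul_descFactorial hm).symm
  have hi' : k.descFactorial (m' + i) = i.factorial * (k - m').choose i * k.descFactorial m' := by
    rw [← Nat.descFactorial_mul_descFactorial (Nat.le_add_right m' i), Nat.add_sub_cancel_left,
      Nat.descFactorial_eq_factorial_mul_choose]
  rw [ht, hm', hi', Nat.sub_add_eq]
  simp only [smul_eq_C_mul, map_mul, Nat.cast_mul]
  ring

theorem dvd_descFactorial_of_dvd_sub {d n j l : ℕ} (hl : l < j) (h : d ∣ n - l) :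
    d ∣ n.descFactorial j := by
  rw [Nat.descFactorial_eq_prod_range]
  exact h.trans (dvd_prod_of_mem _ (mem_range.2 hl))

theorem dvd_descFactorial_sub_of_dvd {q k m m' c : ℕ} (hq : Odd q) (hq1 : 1 < q)
    (hk : q ∣ 2 * k + 1) (hm : m ≤ k) (hc : c < q) (hmc : m + c = q * m' + (q - 1) / 2)
    (hm' : m' ≠ 0) : q ∣ (k - m').descFactorial (m - m') := by
  obtain ⟨h, rfl⟩ := hq
  rw [show (2 * h + 1 - 1) / 2 = h by omega] at hmc
  obtain ⟨b, rfl⟩ := Nat.exists_eq_add_one_of_ne_zero hm'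
  have hexp : (2 * h + 1) * (b + 1) = (2 * h + 1) * b + (2 * h + 1) := by ring
  have hb : b ≤ (2 * h + 1) * b := Nat.le_mul_of_pos_left _ (by omega)
  refine dvd_descFactorial_of_dvd_sub (l := (2 * h + 1) * b + h - (b + 1)) (by omega) ?_
  have hdouble : 2 * (k - (b + 1) - ((2 * h + 1) * b + h - (b + 1))) =
      2 * k + 1 - (2 * h + 1) * (2 * b + 1) := by
    rw [show (2 * h + 1) * (2 * b + 1) = 2 * ((2 * h + 1) * b) + (2 * h + 1) by ring]
    omega
  have hodd : Odd (2 * h + 1) := odd_two_mul_add_one h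
  exact hodd.coprime_two_right.dvd_of_dvd_mul_left
    (hdouble ▸ Nat.dvd_sub hk (dvd_mul_right _ _))

theorem mul_pow_mem_span_sup_smul_poleLattice (hp : Odd p) {F B : ℤ_[p][X]} {k m m' c : ℕ}
    (hk : p ∣ 2 * k + 1) (hm : m ≤ k) (hm' : m' ≤ m) (hc : c < p)
    (hmc : m + c = p * m' + (p - 1) / 2) (hB : B.natDegree ≤ m' * F.natDegree) :
    C (k.descFactorial m : ℤ_[p]) * (B * F ^ (k - m')) ∈
      ℤ_[p] ∙ F ^ k ⊔ (p : ℤ_[p]) • poleLattice F k := by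
  obtain rfl | hpos := eq_or_ne m' 0
  · refine Submodule.mem_sup_left (Submodule.mem_span_singleton.2
      ⟨k.descFactorial m * B.coeff 0, ?_⟩)
    rw [eq_C_of_natDegree_eq_zero (p := B) (by omega), smul_eq_C_mul, Nat.sub_zero, coeff_C_zero,
      C_mul, mul_assoc]
  · obtain ⟨t, ht⟩ :=
      dvd_descFactorial_sub_of_dvd hp (Fact.out : p.Prime).one_lt hk hm hc hmc hpos
    refine Submodule.mem_sup_right (Submodule.mem_smul_pointwise_iff_exists _ _ _ |>.2
      ⟨_, Submodule.smul_mem _ (t : ℤ_[p]) (mem_poleLattice (hm'.trans hm) hB), ?_⟩)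
    rw [← Nat.descFactorial_mul_descFactorial hm', ht]
    simp only [smul_eq_C_mul, map_mul, Nat.cast_mul]
    ring

theorem exists_add_eq_mul_add_half {q : ℕ} (hq : Odd q) (m : ℕ) :
    ∃ m' c, m' ≤ m ∧ c < q ∧ m + c = q * m' + (q - 1) / 2 := by
  obtain ⟨h, rfl⟩ := hq
  have hdiv := Nat.div_add_mod (m + h) (2 * h + 1)
  have hmod := Nat.mod_lt (m + h) (show 2 * h + 1 > 0 by omega)
  exact ⟨(m + h) / (2 * h + 1), 2 * h - (m + h) % (2 * h + 1),
    Nat.lt_succ_iff.1 (Nat.div_lt_of_lt_mul (by nlinarith)), by omega, by omega⟩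

theorem natDegree_cartier_pow_mul_le {q : ℕ} (hq : Odd q) {F g A : R[X]} (hF : F.natDegree ≤ 3)
    (hg : g.natDegree ≤ q * F.natDegree) {i m m' c : ℕ} (hA : A.natDegree ≤ m * F.natDegree)
    (hmc : m + c = q * m' + (q - 1) / 2) :
    (cartier q (g ^ i * (F ^ c * A))).natDegree ≤ (m' + i) * F.natDegree := by
  refine natDegree_cartier_le hq.pos ?_
  obtain ⟨h, rfl⟩ := hq
  rw [show (2 * h + 1 - 1) / 2 = h by omega] at *
  calc (g ^ i * (F ^ c * A)).natDegree
      ≤ i * ((2 * h + 1) * F.natDegree) + (c * F.natDegree + m * F.natDegree) :=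
        natDegree_mul_le_of_le (natDegree_pow_le_of_le i hg)
          (natDegree_mul_le_of_le natDegree_pow_le hA)
    _ = (2 * h + 1) * ((m' + i) * F.natDegree) + h * F.natDegree := by
        linear_combination F.natDegree * hmc
    _ < _ := by nlinarith

theorem twistedCartier_mem_span_sup_smul_poleLattice (hp : Odd p) {F : ℤ_[p][X]}
    (hF : F.natDegree ≤ 3) {k E : ℕ} (hk : p ∣ 2 * k + 1) (hE : E + k = p * k + (p - 1) / 2)
    {w : ℤ_[p][X]} (hw : w ∈ poleLattice F k) :
    twistedCartier p (F ^ E) w ∈ ℤ_[p] ∙ F ^ k ⊔ (p : ℤ_[p]) • poleLattice F k := by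
  suffices poleLattice F k ≤ (ℤ_[p] ∙ F ^ k ⊔ (p : ℤ_[p]) • poleLattice F k).comap
    (twistedCartier p (F ^ E)) from this hw
  refine Submodule.span_le.2 ?_
  rintro _ ⟨m, A, hm, hA, rfl⟩
  obtain ⟨m', c, hm', hc, hmc⟩ : ∃ m' c, m' ≤ m ∧ c < p ∧ m + c = p * m' + (p - 1) / 2 :=
    exists_add_eq_mul_add_half hp m
  obtain ⟨g, hg, hgdeg⟩ := exists_pow_eq_expand_add F
  have hsplit : F ^ E * (C (k.descFactorial m : ℤ_[p]) * (A * F ^ (k - m))) =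
      C (k.descFactorial m : ℤ_[p]) * (F ^ (p * (k - m')) * (F ^ c * A)) := by
    have hexp : E + (k - m) = p * (k - m') + c := by
      zify [hm, hm'.trans hm] at *
      linear_combination hE - hmc
    rw [mul_left_comm, mul_left_comm (F ^ E), ← pow_add, hexp, pow_add]
    ring
  rw [SetLike.mem_coe, Submodule.mem_comap, twistedCartier_apply, hsplit, ← smul_eq_C_mul, map_smul,
    smul_eq_C_mul, cartier_pow_mul hp.pos hg, mul_sum]
  have hdeg (i : ℕ) := natDegree_cartier_pow_mul_le hp hF hgdeg (i := i) hA hmc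
  refine sum_mem fun i hi => ?_
  rw [← mul_assoc, ← C_mul]
  obtain rfl | hi0 := eq_or_ne i 0
  · simpa using mul_pow_mem_span_sup_smul_poleLattice hp hk hm hm' hc hmc (hdeg 0)
  · exact Submodule.mem_sup_right
      (pow_mul_mem_smul_poleLattice hm' hi0 (by grind) (hdeg i))

end RankOne

end PoleLattice

section PowerSeriesFunctionals

variable {R : Type*} [CommRing R]

theorem coe_polynomial_expand {q : ℕ} (hq : q ≠ 0) (f : R[X]) :
    (expand R q f : PowerSeries R) = PowerSeries.expand q hq f := by
  ext n
  rw [coeff_coe, coeff_expand (Nat.pos_of_ne_zero hq), PowerSeries.coeff_expand, coeff_coe]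

theorem coeff_expand_mul_coe {q : ℕ} (hq : q ≠ 0) (φ : PowerSeries R) (f : R[X]) (a : ℕ) :
    (PowerSeries.expand q hq φ * (f : PowerSeries R)).coeff (q * a + (q - 1) / 2) =
      (φ * (cartier q f : PowerSeries R)).coeff a := by
  have hq' : 0 < q := Nat.pos_of_ne_zero hq
  induction f using Polynomial.induction_on' with
  | add f g hf hg => simp only [map_add, Polynomial.coe_add, mul_add, hf, hg]
  | monomial i c =>
    have hi := Nat.div_add_mod i q
    have hle : i / q ≤ a ↔ q * (i / q) ≤ q * a := (Nat.mul_le_mul_left_iff hq').symm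
    rw [cartier_monomial, apply_ite ((↑) : R[X] → PowerSeries R), Polynomial.coe_zero]
    simp only [← C_mul_X_pow_eq_monomial, Polynomial.coe_mul, Polynomial.coe_pow, Polynomial.coe_X,
      Polynomial.coe_C, mul_ite, mul_zero,
      ← mul_assoc, PowerSeries.coeff_mul_X_pow', apply_ite (PowerSeries.coeff a), map_zero,
      PowerSeries.coeff_mul_C]
    by_cases hmod : i % q = (q - 1) / 2
    · rw [if_pos hmod]
      refine if_congr (by omega) ?_ rfl
      rw [show q * a + (q - 1) / 2 - i = q * (a - i / q) by rw [Nat.mul_sub]; omega,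
        PowerSeries.coeff_expand_mul]
    · rw [if_neg hmod, ite_eq_right_iff]
      intro hia
      rw [PowerSeries.coeff_expand_of_not_dvd, zero_mul]
      rw [← Nat.modEq_iff_dvd' hia, Nat.ModEq, Nat.mul_add_mod_self_left,
        Nat.mod_eq_of_lt (by omega : (q - 1) / 2 < q)]
      exact hmod

theorem pow_sub_pow_mul_pow_eq {S : Type*} [CommRing S] {f j f' j' : S} (hj : f * j = 1)
    (hj' : f' * j' = 1) (d e e' : ℕ) :
    j ^ e' - j' ^ e * f ^ d = j ^ e' * j' ^ e * (f' ^ e - f ^ (d + e')) := by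
  have h : f ^ e' * j ^ e' = 1 := by rw [← mul_pow, hj, one_pow]
  have h' : f' ^ e * j' ^ e = 1 := by rw [← mul_pow, hj', one_pow]
  rw [pow_add]
  linear_combination (j' ^ e * f ^ d) * h - j ^ e' * h'

theorem pow_dvd_pow_mul_sub_expand_pow {p : ℕ} [Fact p.Prime] (F : ℤ_[p][X]) {s e : ℕ}
    (he : p ^ s ∣ e) : C ((p : ℤ_[p]) ^ (s + 1)) ∣ expand _ p F ^ e - F ^ (p * e) := by
  obtain ⟨b, rfl⟩ := he
  obtain ⟨g, hg, -⟩ := exists_pow_eq_expand_add F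
  have hdvd : (p : ℤ_[p][X]) ∣ expand _ p F - F ^ p := ⟨-g, by rw [hg, map_natCast]; ring⟩
  rw [pow_mul, pow_mul, pow_mul, map_pow, map_natCast]
  exact (dvd_sub_pow_of_dvd_sub hdvd s).trans (sub_dvd_pow_sub_pow _ _ b)

/-- Raising `F` to the power `p ^ s` commutes with `X ↦ X ^ p` modulo `p ^ (s + 1)`, so that
negative powers of `F` can be moved through the twisted Cartier operator. -/
theorem pow_dvd_coeff_sub_coeff_twistedCartier {p : ℕ} [Fact p.Prime] {F : ℤ_[p][X]}
    {J : PowerSeries ℤ_[p]} (hJ : (F : PowerSeries ℤ_[p]) * J = 1) {a d e e' s : ℕ}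
    (hd : d + e' = p * e) (he : p ^ s ∣ e) (w : ℤ_[p][X]) :
    (p : ℤ_[p]) ^ (s + 1) ∣ ((w : PowerSeries ℤ_[p]) * J ^ e').coeff (p * a + (p - 1) / 2) -
      ((twistedCartier p (F ^ d) w : PowerSeries ℤ_[p]) * J ^ e).coeff a := by
  have hp0 : p ≠ 0 := (Fact.out : p.Prime).ne_zero
  have hJ' : (expand _ p F : PowerSeries ℤ_[p]) * PowerSeries.expand p hp0 J = 1 := by
    rw [coe_polynomial_expand hp0, ← map_mul, hJ, map_one]
  obtain ⟨G, hG⟩ := pow_dvd_pow_mul_sub_expand_pow F he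
  have hG' := congrArg (fun f : ℤ_[p][X] => (f : PowerSeries ℤ_[p])) hG
  simp only [Polynomial.coe_sub, Polynomial.coe_pow, Polynomial.coe_mul, Polynomial.coe_C] at hG'
  have hdiff := pow_sub_pow_mul_pow_eq hJ hJ' d e e'
  rw [hd, hG'] at hdiff
  rw [twistedCartier_apply, mul_comm _ (J ^ e), ← coeff_expand_mul_coe hp0, ← map_sub, map_pow]
  have hfactor : (w : PowerSeries ℤ_[p]) * J ^ e' -
      PowerSeries.expand p hp0 J ^ e * ((F ^ d * w : ℤ_[p][X]) : PowerSeries ℤ_[p]) =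
      PowerSeries.C ((p : ℤ_[p]) ^ (s + 1)) *
        (J ^ e' * PowerSeries.expand p hp0 J ^ e * G * w) := by
    simp only [Polynomial.coe_mul, Polynomial.coe_pow]
    linear_combination (w : PowerSeries ℤ_[p]) * hdiff
  rw [hfactor, PowerSeries.coeff_C_mul]
  exact dvd_mul_right _ _

end PowerSeriesFunctionals

section DworkCongruenceForCoefficients

theorem half_pow_succ {q : ℕ} (hq : Odd q) (s : ℕ) :
    (q ^ (s + 1) - 1) / 2 = q * ((q ^ s - 1) / 2) + (q - 1) / 2 := by
  obtain ⟨b, hb⟩ := hq.pow (n := s)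
  obtain ⟨h, rfl⟩ := hq
  rw [pow_succ', hb, show (2 * h + 1) * (2 * b + 1) = 2 * ((2 * h + 1) * b + h) + 1 by ring]
  simp

theorem half_pow_le_half_pow {q s t : ℕ} (hq : 0 < q) (hst : s ≤ t) :
    (q ^ s - 1) / 2 ≤ (q ^ t - 1) / 2 := by
  gcongr

theorem pow_dvd_half_pow_sub_half_pow {q s t : ℕ} (hq : Odd q) (hst : s ≤ t) :
    q ^ s ∣ (q ^ t - 1) / 2 - (q ^ s - 1) / 2 := by
  refine (hq.pow (n := s)).coprime_two_right.dvd_of_dvd_mul_left ?_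
  have hdouble : 2 * ((q ^ t - 1) / 2 - (q ^ s - 1) / 2) = q ^ t - q ^ s := by
    obtain ⟨b, hb⟩ := hq.pow (n := s)
    obtain ⟨c, hc⟩ := hq.pow (n := t)
    omega
  exact hdouble ▸ Nat.dvd_sub (pow_dvd_pow q hst) dvd_rfl

theorem half_mul_add_half {q Q : ℕ} (hq : Odd q) (hQ : Odd Q) :
    (q - 1) / 2 * Q + (Q - 1) / 2 = q * ((Q - 1) / 2) + (q - 1) / 2 := by
  obtain ⟨h, rfl⟩ := hq
  obtain ⟨k, rfl⟩ := hQ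
  simp
  ring

/-- The functional `w ↦ [X ^ a] (w * J ^ e)`, of interest when `J` is a power series inverse of the
polynomial defining the pole lattice. -/
noncomputable def coeffMulPow {R : Type*} [CommRing R] (J : PowerSeries R) (a e : ℕ) :
    R[X] →ₗ[R] R :=
  PowerSeries.coeff a ∘ₗ LinearMap.mulRight R (J ^ e) ∘ₗ
    (coeToPowerSeries.algHom R).toLinearMap

theorem coeffMulPow_apply {R : Type*} [CommRing R] (J : PowerSeries R) (a e : ℕ) (w : R[X]) :
    coeffMulPow J a e w = ((w : PowerSeries R) * J ^ e).coeff a := rfl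

theorem coeffMulPow_pow {R : Type*} [CommRing R] {F : R[X]} {J : PowerSeries R}
    (hJ : (F : PowerSeries R) * J = 1) {a k : ℕ} (hak : a ≤ k) :
    coeffMulPow J a (k - a) (F ^ k) = (F ^ a).coeff a := by
  obtain ⟨b, rfl⟩ := Nat.exists_eq_add_of_le hak
  rw [coeffMulPow_apply, Nat.add_sub_cancel_left, Polynomial.coe_pow, pow_add, mul_assoc, ← mul_pow,
    hJ, one_pow, mul_one, ← Polynomial.coe_pow, coeff_coe]

variable {p : ℕ} [Fact p.Prime] {F : ℤ_[p][X]}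

theorem pow_dvd_coeffMulPow_sub (hp : Odd p) {J : PowerSeries ℤ_[p]}
    (hJ : (F : PowerSeries ℤ_[p]) * J = 1) {s n : ℕ} (hs : s ≤ n) (w : ℤ_[p][X]) :
    (p : ℤ_[p]) ^ (s + 1) ∣
      coeffMulPow J ((p ^ (s + 1) - 1) / 2) ((p ^ (n + 1) - 1) / 2 - (p ^ (s + 1) - 1) / 2) w -
        coeffMulPow J ((p ^ s - 1) / 2) ((p ^ (n + 1) - 1) / 2 - (p ^ s - 1) / 2)
          (twistedCartier p (F ^ ((p - 1) / 2 * p ^ (n + 1))) w) := by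
  have hpos : 0 < p := hp.pos
  rw [coeffMulPow_apply, coeffMulPow_apply, half_pow_succ hp s]
  refine pow_dvd_coeff_sub_coeff_twistedCartier hJ ?_
    (pow_dvd_half_pow_sub_half_pow hp (hs.trans n.le_succ)) w
  have hle := half_pow_le_half_pow hpos (hs.trans n.le_succ)
  have hle' := half_pow_succ hp s ▸ half_pow_le_half_pow hpos (Nat.succ_le_succ hs)
  have hhalf := half_mul_add_half hp (hp.pow (n := n + 1))
  zify [hle, hle'] at hhalf ⊢
  linear_combination hhalf

theorem twistedCartier_mem_poleLattice (hp : Odd p) (hF : F.natDegree ≤ 3) {k E : ℕ}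
    (hk : p ∣ 2 * k + 1) (hE : E + k = p * k + (p - 1) / 2) {w : ℤ_[p][X]}
    (hw : w ∈ poleLattice F k) : twistedCartier p (F ^ E) w ∈ poleLattice F k :=
  sup_le (Submodule.span_singleton_le_iff_mem _ _ |>.2 (pow_mem_poleLattice F k))
    (Submodule.smul_le_self_of_tower _ _)
    (twistedCartier_mem_span_sup_smul_poleLattice hp hF hk hE hw)

theorem isRankOneMod_twistedCartier (hp : Odd p) (hF : F.natDegree ≤ 3) {k E : ℕ}
    (hk : p ∣ 2 * k + 1) (hE : E + k = p * k + (p - 1) / 2) :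
    IsRankOneMod (p : ℤ_[p])
      ((twistedCartier p (F ^ E)).restrict fun _ => twistedCartier_mem_poleLattice hp hF hk hE)
      ⟨F ^ k, pow_mem_poleLattice F k⟩ := by
  rintro ⟨w, hw⟩
  obtain ⟨x, hx, y, hy, hxy⟩ := Submodule.mem_sup.1
    (twistedCartier_mem_span_sup_smul_poleLattice hp hF hk hE hw)
  obtain ⟨a, rfl⟩ := Submodule.mem_span_singleton.1 hx
  obtain ⟨w', hw', rfl⟩ := (Submodule.mem_smul_pointwise_iff_exists _ _ _).1 hy
  exact ⟨a, ⟨w', hw'⟩, Subtype.ext hxy.symm⟩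

theorem coeff_twistedCartier_pow_X_pow {R : Type*} [CommRing R] {q : ℕ} (hq : Odd q) (H : R[X])
    (r j : ℕ) : ((twistedCartier q H ^ r) (X ^ j)).coeff j =
      (∏ i ∈ range r, expand R (q ^ i) H).coeff ((q ^ r - 1) * j + (q ^ r - 1) / 2) := by
  have hpos : 0 < q ^ r := pow_pos hq.pos r
  have hindex : q ^ r * j + (q ^ r - 1) / 2 = (q ^ r - 1) * j + (q ^ r - 1) / 2 + j := by
    obtain ⟨b, hb⟩ := Nat.exists_eq_add_of_lt hpos
    rw [hb, Nat.add_sub_cancel]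
    ring
  rw [twistedCartier_pow hq, coeff_cartier hpos, hindex, coeff_mul_X_pow]

theorem dwork_congr_of_sum_coeff (hp : Odd p) (hF : F.natDegree ≤ 3) (hF₀ : F.coeff 0 = 1) {n : ℕ}
    {β : ℤ_[p]} (hβ : IsUnit β)
    (htr : ∀ r, 1 ≤ r → r ≤ n + 2 → (p : ℤ_[p]) ^ r ∣
      (∑ j ∈ range ((p ^ (n + 1) - 1) / 2 * F.natDegree + 1),
        (∏ i ∈ range r, expand _ (p ^ i) (F ^ ((p - 1) / 2 * p ^ (n + 1)))).coeff
          ((p ^ r - 1) * j + (p ^ r - 1) / 2)) - β ^ r) :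
    (p : ℤ_[p]) ^ (n + 1) ∣ (F ^ ((p ^ (n + 1) - 1) / 2)).coeff ((p ^ (n + 1) - 1) / 2) -
      β * (F ^ ((p ^ n - 1) / 2)).coeff ((p ^ n - 1) / 2) := by
  set k := (p ^ (n + 1) - 1) / 2 with hk
  have hE : (p - 1) / 2 * p ^ (n + 1) + k = p * k + (p - 1) / 2 := half_mul_add_half hp hp.pow
  have hpk : p ∣ 2 * k + 1 := by
    rw [hk, Nat.two_mul_div_two_of_even (hp.pow.tsub_odd odd_one),
      Nat.sub_add_cancel (Nat.one_le_pow _ _ hp.pos)]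
    exact dvd_pow_self p n.succ_ne_zero
  obtain ⟨J, hJ⟩ : ∃ J : PowerSeries ℤ_[p], (F : PowerSeries ℤ_[p]) * J = 1 :=
    ⟨_, PowerSeries.mul_invOfUnit _ 1 (by simp [hF₀])⟩
  have hT (s : ℕ) (hs : s ≤ n + 1) :
      coeffMulPow J ((p ^ s - 1) / 2) (k - (p ^ s - 1) / 2) (F ^ k) =
        (F ^ ((p ^ s - 1) / 2)).coeff ((p ^ s - 1) / 2) :=
    coeffMulPow_pow hJ (half_pow_le_half_pow hp.pos hs)
  rw [← hT _ n.le_succ, ← hT _ le_rfl]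
  refine dwork_congr_of_trace (T := fun s => coeffMulPow J ((p ^ s - 1) / 2)
    (k - (p ^ s - 1) / 2) ∘ₗ (poleLattice F k).subtype) PadicInt.p_nonunit
    (isRankOneMod_twistedCartier hp hF hpk hE)
    (fun s hs w => pow_dvd_coeffMulPow_sub hp hJ hs w) ?_ hβ fun r hr1 hr2 => ?_
  · simpa using hT 0 (Nat.zero_le _)
  · rw [Module.End.pow_restrict, trace_restrict_poleLattice]
    simpa only [coeff_twistedCartier_pow_X_pow hp] using htr r hr1 hr2

end DworkCongruenceForCoefficients

section TraceFormula

theorem sum_ite_dvd_add_half {M : Type*} [AddCommMonoid M] {m : ℕ} (hm : 0 < m) (D : ℕ)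
    (g : ℕ → M) :
    (∑ i ∈ range (2 * m * D + m), if 2 * m ∣ i + m then g i else 0) =
      ∑ j ∈ range D, g (2 * m * j + m) := by
  have hdiv (j : ℕ) : (2 * m * j + m) / (2 * m) = j := by
    rw [Nat.mul_add_div (by positivity), Nat.div_eq_of_lt (by lia), add_zero]
  have hform {i : ℕ} (hi : 2 * m ∣ i + m) : ∃ c, i = 2 * m * c + m := by
    obtain ⟨c, hc⟩ := hi
    rcases c with _ | c
    · lia
    · exact ⟨c, by linarith⟩
  rw [← sum_filter]
  refine sum_nbij' (· / (2 * m)) (2 * m * · + m) ?_ ?_ ?_ (fun j _ => hdiv j) ?_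
  · intro i hi
    obtain ⟨hlt, c, rfl⟩ := (mem_filter.1 hi).imp_right hform
    rw [hdiv]
    simpa [hm] using hlt
  · intro j hj
    simp only [mem_filter, mem_range, add_lt_add_iff_right] at hj ⊢
    exact ⟨by gcongr, j + 1, by ring⟩
  all_goals
    intro i hi
    obtain ⟨c, rfl⟩ := hform (mem_filter.1 hi).2
    simp only [hdiv]

theorem pow_dvd_of_pow_dvd_map {p : ℕ} [Fact p.Prime] {W : Type*} [CommRing W] [IsDomain W]
    (hp : Prime (p : W)) (φ : ℤ_[p] →+* W) {n : ℕ} {x : ℤ_[p]} (h : (p : W) ^ n ∣ φ x) :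
    (p : ℤ_[p]) ^ n ∣ x := by
  rcases eq_or_ne x 0 with rfl | hx
  · exact dvd_zero _
  · have hspec := PadicInt.unitCoeff_spec hx
    rw [hspec, map_mul, map_pow, map_natCast,
      ((PadicInt.unitCoeff hx).isUnit.map φ).dvd_mul_left,
      pow_dvd_pow_iff hp.ne_zero hp.not_isUnit] at h
    rw [hspec]
    exact (pow_dvd_pow _ h).mul_left _

theorem ringHom_padicInt_ext {K : Type*} [CommRing K] {p : ℕ} [Fact p.Prime] [CharP K p]
    (f g : ℤ_[p] →+* K) : f = g := by
  have apply_eq (f : ℤ_[p] →+* K) (x : ℤ_[p]) : f x = (PadicInt.zmodRepr x : K) := by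
    obtain ⟨y, hy⟩ := Ideal.mem_span_singleton.1
      (PadicInt.maximalIdeal_eq_span_p (p := p) ▸ PadicInt.sub_zmodRepr_mem x)
    have h := congrArg f hy
    rwa [map_sub, map_mul, map_natCast, map_natCast, CharP.cast_eq_zero K p,
      zero_mul, sub_eq_zero] at h
  ext x
  rw [apply_eq, apply_eq]

variable {K : Type*} [Field K] [Fintype K]

theorem lift_pow_half_pow {W : Type*} [CommRing W] {θ : K →* W} {x : K} (hx : x ≠ 0)
    (hK : Odd (Fintype.card K)) {n : ℕ} (hn : Odd n) :
    (θ x ^ ((Fintype.card K - 1) / 2)) ^ n = θ x ^ ((Fintype.card K - 1) / 2) := by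
  obtain ⟨k, rfl⟩ := hn
  rw [pow_succ, pow_mul, ← pow_mul (θ x), Nat.div_mul_cancel (hK.tsub_odd odd_one).two_dvd,
    ← map_pow, FiniteField.pow_card_sub_one_eq_one x hx, map_one, one_pow, one_mul]

variable [DecidableEq K]

theorem sum_units_pow_lift {W : Type*} [CommRing W] [IsDomain W] {θ : K →* W}
    (hθ : Function.Injective θ) (i : ℕ) :
    ∑ x : Kˣ, θ x ^ i = if Fintype.card K - 1 ∣ i then ((Fintype.card K - 1 : ℕ) : W) else 0 := by
  classical
  have htriv : (powMonoidHom i).comp (θ.comp (Units.coeHom K)) = 1 ↔ Fintype.card K - 1 ∣ i := by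
    rw [← FiniteField.forall_pow_eq_one_iff, DFunLike.ext_iff]
    refine forall_congr' fun x => ?_
    simp only [MonoidHom.comp_apply, powMonoidHom_apply, Units.coeHom_apply, MonoidHom.one_apply,
      ← map_pow]
    rw [← map_one θ, hθ.eq_iff, ← Units.val_pow_eq_pow_val, Units.val_eq_one]
  have hsum := sum_hom_units ((powMonoidHom i).comp (θ.comp (Units.coeHom K)))
  simp only [htriv, Fintype.card_units, Nat.cast_ite, Nat.cast_zero] at hsum
  exact hsum

theorem sum_units_pow_mul_eval₂_lift {R W : Type*} [CommRing R] [CommRing W] [IsDomain W]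
    {θ : K →* W} (hθ : Function.Injective θ) (φ : R →+* W) (hK : Odd (Fintype.card K)) {H : R[X]}
    {D : ℕ} (hH : H.natDegree < (Fintype.card K - 1) * D + (Fintype.card K - 1) / 2) :
    ∑ x : Kˣ, θ x ^ ((Fintype.card K - 1) / 2) * H.eval₂ φ (θ x) =
      φ ((Fintype.card K - 1 : ℕ) *
        ∑ j ∈ range D, H.coeff ((Fintype.card K - 1) * j + (Fintype.card K - 1) / 2)) := by
  obtain ⟨m, hm⟩ := hK
  have hpos : 0 < m := by
    have := Fintype.one_lt_card (α := K)
    lia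
  have hsum := sum_units_pow_lift hθ
  rw [show Fintype.card K - 1 = 2 * m by lia] at *
  rw [Nat.mul_div_cancel_left _ two_pos] at *
  calc ∑ x : Kˣ, θ x ^ m * H.eval₂ φ (θ x)
      = ∑ i ∈ range (2 * m * D + m), φ (H.coeff i) * ∑ x : Kˣ, θ x ^ (i + m) := by
        simp only [eval₂_eq_sum_range' φ hH, mul_sum]
        rw [sum_comm]
        exact sum_congr rfl fun i _ => sum_congr rfl fun x _ => by ring
    _ = ∑ i ∈ range (2 * m * D + m),
          if 2 * m ∣ i + m then φ ((2 * m : ℕ) * H.coeff i) else 0 := by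
        refine sum_congr rfl fun i _ => ?_
        rw [hsum, mul_ite, mul_zero, mul_comm (φ _), map_mul, map_natCast]
    _ = φ ((2 * m : ℕ) * ∑ j ∈ range D, H.coeff (2 * m * j + m)) := by
        rw [sum_ite_dvd_add_half hpos, mul_sum, map_sum]

theorem sum_units_quadraticChar_mul (f : K → K) :
    ∑ x : Kˣ, quadraticChar K (x * f x) = ∑ x : K, quadraticChar K (x * f x) := by
  have hzero : ∑ x : {x : K // ¬ x ≠ 0}, quadraticChar K (x * f x) = 0 :=
    sum_eq_zero fun x _ => by rw [not_not.1 x.2, zero_mul, quadraticChar_zero]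
  rw [← Fintype.sum_subtype_add_sum_subtype (fun x : K => x ≠ 0)
    (fun x => quadraticChar K (x * f x)), hzero, add_zero]
  exact (unitsEquivNeZero (G₀ := K)).sum_comp
    (fun x : {x : K // x ≠ 0} => quadraticChar K ((x : K) * f x))

theorem quadraticChar_pow_odd {n : ℕ} (hn : Odd n) (x : K) :
    quadraticChar K x ^ n = quadraticChar K x := by
  rcases quadraticChar_isQuadratic K x with h | h | h
  · rw [h, zero_pow hn.pos.ne']
  · rw [h, one_pow]
  · rw [h, hn.neg_one_pow]

variable {R W : Type*} [CommRing R] [CommRing W] {p : ℕ}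

theorem pow_half_mul_prod_eval₂_pow_eq_quadraticChar [Fact p.Prime] [CharP K p] (hp : p ≠ 2) {r : ℕ}
    (hK : Fintype.card K = p ^ r) (f : R →+* K) (hf : ∀ a, f a ^ p = f a) (F : R[X]) (x : K) :
    x ^ ((p ^ r - 1) / 2) * ∏ i ∈ range r, F.eval₂ f (x ^ p ^ i) ^ ((p - 1) / 2) =
      (quadraticChar K (x * F.eval₂ f x) : ℤ) := by
  have hodd : Odd p := (Fact.out : p.Prime).odd_of_ne_two hp
  have hfrob (i : ℕ) : F.eval₂ f (x ^ p ^ i) = F.eval₂ f x ^ p ^ i := by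
    have hcomp : (iterateFrobenius K p i).comp f = f := by
      ext a
      rw [RingHom.comp_apply, iterateFrobenius_def]
      induction i with
      | zero => rw [pow_zero, pow_one]
      | succ i ih => rw [pow_succ', pow_mul, hf, ih]
    rw [← iterateFrobenius_def, ← iterateFrobenius_def, hom_eval₂, hcomp]
  have hgeom : ∑ i ∈ range r, p ^ i * ((p - 1) / 2) = (p ^ r - 1) / 2 := by
    rw [← sum_mul, ← Nat.mul_div_assoc _ (hodd.tsub_odd odd_one).two_dvd,
      geom_sum_mul_of_one_le hodd.pos]
  obtain ⟨m, hm⟩ := hodd.pow (n := r)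
  have hhalf : (p ^ r - 1) / 2 = p ^ r / 2 := by lia
  simp only [hfrob, ← pow_mul, prod_pow_eq_pow_sum, hgeom]
  rw [quadraticChar_eq_pow_of_char_ne_two' (by rwa [ringChar.eq K p]), hK, ← mul_pow, hhalf]

theorem pow_dvd_sum_units_sub_quadraticChar [Fact p.Prime] [CharP K p] (hp : p ≠ 2) {r : ℕ}
    (hK : Fintype.card K = p ^ r) {θ : K →* W} (φ : R →+* W) (π : W →+* K)
    (hπθ : ∀ x, π (θ x) = x) (hπ : ∀ w, π w = 0 → (p : W) ∣ w)
    (hφ : ∀ a, π (φ a) ^ p = π (φ a)) (F : R[X]) (M : ℕ) :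
    (p : W) ^ (M + 1) ∣ ∑ x : Kˣ, θ x ^ ((p ^ r - 1) / 2) *
      (∏ i ∈ range r, expand _ (p ^ i) (F ^ ((p - 1) / 2 * p ^ M))).eval₂ φ (θ x) -
      ((∑ x : K, quadraticChar K (x * F.eval₂ (π.comp φ) x) : ℤ) : W) := by
  have hodd : Odd p := (Fact.out : p.Prime).odd_of_ne_two hp
  rw [← sum_units_quadraticChar_mul, Int.cast_sum, ← sum_sub_distrib]
  refine dvd_sum fun x _ => ?_
  have hpow : θ x ^ ((p ^ r - 1) / 2) *
      (∏ i ∈ range r, expand _ (p ^ i) (F ^ ((p - 1) / 2 * p ^ M))).eval₂ φ (θ x) =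
      (θ x ^ ((p ^ r - 1) / 2) *
        ∏ i ∈ range r, F.eval₂ φ (θ x ^ p ^ i) ^ ((p - 1) / 2)) ^ p ^ M := by
    rw [mul_pow, ← hK, lift_pow_half_pow x.ne_zero (hK ▸ hodd.pow) hodd.pow, eval₂_finsetProd,
      ← prod_pow]
    congr 1
    refine prod_congr rfl fun i _ => ?_
    rw [expand_eq_comp_X_pow, eval₂_comp, eval₂_X_pow, eval₂_pow, pow_mul]
  rw [hpow, ← quadraticChar_pow_odd (hodd.pow (n := M)), Int.cast_pow]
  refine dvd_sub_pow_of_dvd_sub (hπ _ ?_) M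
  rw [map_sub, map_intCast, sub_eq_zero,
    ← pow_half_mul_prod_eval₂_pow_eq_quadraticChar hp hK (π.comp φ) hφ F x]
  simp only [map_mul, map_prod, map_pow, hπθ, hom_eval₂]

theorem pow_dvd_sum_coeff_sub_quadraticChar [Fact p.Prime] [CharP K p] (hp : p ≠ 2) {r : ℕ}
    (hK : Fintype.card K = p ^ r) (f : ℤ_[p] →+* K) (F : ℤ_[p][X]) (M : ℕ) {D : ℕ}
    (hD : (∏ i ∈ range r, expand _ (p ^ i) (F ^ ((p - 1) / 2 * p ^ M))).natDegree <
      (p ^ r - 1) * D + (p ^ r - 1) / 2) :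
    (p : ℤ_[p]) ^ (M + 1) ∣ (p ^ r - 1 : ℕ) * ∑ j ∈ range D,
      (∏ i ∈ range r, expand _ (p ^ i) (F ^ ((p - 1) / 2 * p ^ M))).coeff
        ((p ^ r - 1) * j + (p ^ r - 1) / 2) -
      ((∑ x : K, quadraticChar K (x * F.eval₂ f x) : ℤ) : ℤ_[p]) := by
  have hodd : Odd p := (Fact.out : p.Prime).odd_of_ne_two hp
  let φ : ℤ_[p] →+* WittVector p K :=
    (WittVector.map (ZMod.castHom dvd_rfl K)).comp (WittVector.fromPadicInt p)
  have hinj : Function.Injective (WittVector.teichmuller p : K →* WittVector p K) :=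
    Function.LeftInverse.injective (g := fun w : WittVector p K => w.coeff 0)
      (WittVector.teichmuller_coeff_zero p)
  have hfix (a : ℤ_[p]) : f a ^ p = f a := by
    rw [ringHom_padicInt_ext f ((ZMod.castHom dvd_rfl K).comp PadicInt.toZMod),
      RingHom.comp_apply, ← map_pow, ZMod.pow_card]
  obtain rfl : WittVector.constantCoeff.comp φ = f := ringHom_padicInt_ext _ _
  refine pow_dvd_of_pow_dvd_map (WittVector.irreducible p (k := K)).prime φ ?_
  rw [map_sub, map_intCast, ← hK, ← sum_units_pow_mul_eval₂_lift hinj φ (hK ▸ hodd.pow) (hK ▸ hD),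
    hK]
  exact pow_dvd_sum_units_sub_quadraticChar hp hK φ _ (WittVector.teichmuller_coeff_zero p)
    (fun w hw => Ideal.mem_span_singleton.1
      ((WittVector.mem_span_p_iff_coeff_zero_eq_zero w).2 hw)) hfix F M

end TraceFormula

section EulerProduct

open UniqueFactorizationMonoid

open scoped Classical in
theorem pow_dvd_iff_le_count_normalizedFactors {k : Type*} [Field k] {P g : k[X]}
    (hP : Irreducible P) (hmon : P.Monic) (hg : g ≠ 0) (e : ℕ) :
    P ^ e ∣ g ↔ e ≤ (normalizedFactors g).count P := by
  rw [pow_dvd_iff_le_emultiplicity, emultiplicity_eq_count_normalizedFactors hP hg,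
    hmon.normalize_eq_self, Nat.cast_le]

open scoped Classical in
theorem sum_natDegree_normalizedFactors {k : Type*} [Field k] {g : k[X]} (hg : g.Monic) :
    ((normalizedFactors g).map natDegree).sum = g.natDegree := by
  rw [← natDegree_multiset_prod_of_monic _ fun P hP =>
    ((Polynomial.mem_normalizedFactors_iff hg.ne_zero).1 hP).2.1,
    prod_normalizedFactors_eq hg.ne_zero, hg.normalize_eq_self]

variable (k : Type*) [Field k] [Finite k]

theorem finite_setOf_monic_natDegree_eq (d : ℕ) : {g : k[X] | g.Monic ∧ g.natDegree = d}.Finite :=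
  have := Finite.of_equiv _ (degreeLTEquiv k d).toEquiv.symm
  Finite.of_equiv _ (monicEquivDegreeLT d).symm

/-- The monic polynomials of degree `d` over a finite field. -/
noncomputable def monicFinset (d : ℕ) : Finset k[X] :=
  (finite_setOf_monic_natDegree_eq k d).toFinset

theorem finite_setOf_irreducible_pow_natDegree_eq (d : ℕ) :
    {x : k[X] × ℕ |
      x.1.Monic ∧ Irreducible x.1 ∧ x.2 ≠ 0 ∧ x.2 * x.1.natDegree = d}.Finite := by
  refine (((Set.finite_Iic d).biUnion fun j _ => finite_setOf_monic_natDegree_eq k j).prod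
    (Set.finite_Iic d)).subset ?_
  rintro ⟨P, e⟩ ⟨hmon, hirr, he, rfl⟩
  exact ⟨Set.mem_biUnion (Nat.le_mul_of_pos_left _ he.pos) ⟨hmon, rfl⟩,
    Nat.le_mul_of_pos_right _ hirr.natDegree_pos⟩

/-- The prime powers `P ^ e` of degree `d`, encoded as pairs `(P, e)` with `P` monic irreducible and
`e` positive. -/
noncomputable def primePowerFinset (d : ℕ) : Finset (k[X] × ℕ) :=
  (finite_setOf_irreducible_pow_natDegree_eq k d).toFinset

variable {k}

theorem mem_monicFinset {d : ℕ} {g : k[X]} : g ∈ monicFinset k d ↔ g.Monic ∧ g.natDegree = d := by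
  simp [monicFinset]

theorem mem_primePowerFinset {d : ℕ} {x : k[X] × ℕ} : x ∈ primePowerFinset k d ↔
    x.1.Monic ∧ Irreducible x.1 ∧ x.2 ≠ 0 ∧ x.2 * x.1.natDegree = d := by
  simp [primePowerFinset]

theorem monicFinset_zero : monicFinset k 0 = {1} := by
  ext g
  rw [mem_monicFinset, mem_singleton]
  exact ⟨fun ⟨hmon, hdeg⟩ => hmon.natDegree_eq_zero.1 hdeg, by rintro rfl; simp⟩

theorem primePowerFinset_zero : primePowerFinset k 0 = ∅ := by
  ext x
  simp only [mem_primePowerFinset, notMem_empty, iff_false, not_and]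
  intro _ hirr he
  exact mul_ne_zero he hirr.natDegree_pos.ne'

theorem pow_mem_monicFinset {d : ℕ} {x : k[X] × ℕ} (hx : x ∈ primePowerFinset k d) :
    x.1 ^ x.2 ∈ monicFinset k d := by
  obtain ⟨hmon, -, -, rfl⟩ := mem_primePowerFinset.1 hx
  exact mem_monicFinset.2 ⟨hmon.pow _, natDegree_pow _ _⟩

open scoped Classical in
theorem sum_natDegree_primePowerFinset {d : ℕ} {g : k[X]} (hg : g ∈ monicFinset k d) :
    ∑ m ∈ range (d + 1), ∑ x ∈ primePowerFinset k m with x.1 ^ x.2 ∣ g, x.1.natDegree = d := by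
  obtain ⟨hmon, rfl⟩ := mem_monicFinset.1 hg
  set s := normalizedFactors g with hs
  let T : Finset (k[X] × ℕ) := (s.toFinset.sigma fun P => Icc 1 (s.count P)).map
    (Equiv.sigmaEquivProd _ _).toEmbedding
  have mem_T (x : k[X] × ℕ) :
      x ∈ T ↔ x.1.Monic ∧ Irreducible x.1 ∧ x.2 ≠ 0 ∧ x.1 ^ x.2 ∣ g := by
    simp only [T, mem_map_equiv, mem_sigma, Multiset.mem_toFinset, mem_Icc,
      Equiv.sigmaEquivProd_symm_apply, hs, Polynomial.mem_normalizedFactors_iff hmon.ne_zero]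
    constructor
    · rintro ⟨⟨hirr, hx, -⟩, he, hle⟩
      exact ⟨hx, hirr, Nat.one_le_iff_ne_zero.1 he,
        (pow_dvd_iff_le_count_normalizedFactors hirr hx hmon.ne_zero _).2 hle⟩
    · rintro ⟨hx, hirr, he, hdvd⟩
      exact ⟨⟨hirr, hx, (dvd_pow_self _ he).trans hdvd⟩, he.pos,
        (pow_dvd_iff_le_count_normalizedFactors hirr hx hmon.ne_zero _).1 hdvd⟩
  have hle : ∀ x ∈ T, x.2 * x.1.natDegree ∈ range (g.natDegree + 1) := fun x hx => by
    rw [mem_range_succ_iff, ← natDegree_pow]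
    exact natDegree_le_of_dvd ((mem_T x).1 hx).2.2.2 hmon.ne_zero
  calc ∑ m ∈ range (g.natDegree + 1), ∑ x ∈ primePowerFinset k m with x.1 ^ x.2 ∣ g, x.1.natDegree
      = ∑ x ∈ T, x.1.natDegree := by
        rw [← sum_fiberwise_of_maps_to hle]
        refine sum_congr rfl fun m _ => sum_congr ?_ fun _ _ => rfl
        ext x
        simp only [mem_filter, mem_primePowerFinset, mem_T]
        tauto
    _ = (s.map natDegree).sum := by
        rw [sum_map, sum_sigma, sum_multiset_map_count]
        simp
    _ = g.natDegree := sum_natDegree_normalizedFactors hmon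

variable {R : Type*} [CommRing R]

/-- The coefficient of degree `d` of the `L`-function `∏ (1 - c P * T ^ deg P)⁻¹` attached to the
completely multiplicative function `c`. -/
noncomputable def monicSum (c : k[X] →* R) (d : ℕ) : R := ∑ g ∈ monicFinset k d, c g

/-- The coefficient of degree `d` of `T * L' / L`, with `L` the `L`-function attached to the
completely multiplicative function `c`. -/
noncomputable def primePowerSum (c : k[X] →* R) (d : ℕ) : R :=
  ∑ x ∈ primePowerFinset k d, x.1.natDegree * c x.1 ^ x.2

theorem monicSum_zero (c : k[X] →* R) : monicSum c 0 = 1 := by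
  rw [monicSum, monicFinset_zero, sum_singleton, map_one]

theorem primePowerSum_zero (c : k[X] →* R) : primePowerSum c 0 = 0 := by
  rw [primePowerSum, primePowerFinset_zero, sum_empty]

open scoped Classical in
theorem sum_monicFinset_filter_dvd (c : k[X] →* R) {m n : ℕ} {h : k[X]} (hh : h ∈ monicFinset k m) :
    ∑ g ∈ monicFinset k (m + n) with h ∣ g, c g = c h * monicSum c n := by
  obtain ⟨hmon, rfl⟩ := mem_monicFinset.1 hh
  have himage : {g ∈ monicFinset k (h.natDegree + n) | h ∣ g} =
      (monicFinset k n).image (h * ·) := by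
    ext g
    simp only [mem_filter, mem_image, mem_monicFinset]
    constructor
    · rintro ⟨⟨hg, hdeg⟩, g, rfl⟩
      have hg' := hmon.of_mul_monic_left hg
      rw [hmon.natDegree_mul hg', add_right_inj] at hdeg
      exact ⟨g, ⟨hg', hdeg⟩, rfl⟩
    · rintro ⟨g, ⟨hg, rfl⟩, rfl⟩
      exact ⟨⟨hmon.mul hg, hmon.natDegree_mul hg⟩, dvd_mul_right h g⟩
  rw [himage, sum_image fun _ _ _ _ h => mul_left_cancel₀ hmon.ne_zero h, monicSum, mul_sum]
  simp only [map_mul]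

theorem natCast_mul_monicSum (c : k[X] →* R) (d : ℕ) :
    (d : R) * monicSum c d =
      ∑ m ∈ range (d + 1), monicSum c m * primePowerSum c (d - m) := by
  classical
  calc (d : R) * monicSum c d
      = ∑ g ∈ monicFinset k d, ∑ m ∈ range (d + 1), ∑ x ∈ primePowerFinset k m,
          x.1.natDegree * if x.1 ^ x.2 ∣ g then c g else 0 := by
        rw [monicSum, mul_sum]
        refine sum_congr rfl fun g hg => ?_
        nth_rw 1 [← sum_natDegree_primePowerFinset hg]
        simp only [Nat.cast_sum, sum_mul, sum_filter, mul_ite, mul_zero, ite_mul, zero_mul,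
          Nat.cast_ite, Nat.cast_zero]
    _ = ∑ m ∈ range (d + 1), ∑ x ∈ primePowerFinset k m,
          x.1.natDegree * ∑ g ∈ monicFinset k d with x.1 ^ x.2 ∣ g, c g := by
        rw [sum_comm]
        refine sum_congr rfl fun m _ => ?_
        rw [sum_comm]
        simp only [mul_sum, sum_filter]
    _ = ∑ m ∈ range (d + 1), primePowerSum c m * monicSum c (d - m) := by
        refine sum_congr rfl fun m hm => ?_
        obtain ⟨n, rfl⟩ := Nat.exists_eq_add_of_le (mem_range_succ_iff.1 hm)
        rw [primePowerSum, sum_mul, Nat.add_sub_cancel_left]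
        refine sum_congr rfl fun x hx => ?_
        rw [sum_monicFinset_filter_dvd c (pow_mem_monicFinset hx), map_pow, mul_assoc]
    _ = ∑ m ∈ range (d + 1), monicSum c m * primePowerSum c (d - m) := by
        rw [← sum_flip]
        refine sum_congr rfl fun m hm => ?_
        rw [Nat.sub_sub_self (mem_range_succ_iff.1 hm), mul_comm]

theorem monicSum_one (c : k[X] →* R) : monicSum c 1 = primePowerSum c 1 := by
  have h := natCast_mul_monicSum c 1
  simp only [sum_range_succ, range_zero, sum_empty, monicSum_zero, primePowerSum_zero,
    Nat.sub_zero, Nat.sub_self, Nat.cast_one] at h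
  linear_combination h

theorem primePowerSum_two (c : k[X] →* R) :
    primePowerSum c 2 = 2 * monicSum c 2 - primePowerSum c 1 ^ 2 := by
  have h := natCast_mul_monicSum c 2
  simp only [sum_range_succ, range_zero, sum_empty, monicSum_zero, monicSum_one,
    primePowerSum_zero, Nat.sub_zero, Nat.sub_self, Nat.reduceSub, Nat.cast_ofNat] at h
  linear_combination -h

theorem primePowerSum_add_three {c : k[X] →* R} (hzero : ∀ d, 3 ≤ d → monicSum c d = 0) (d : ℕ) :
    primePowerSum c (d + 3) =
      -primePowerSum c 1 * primePowerSum c (d + 2) - monicSum c 2 * primePowerSum c (d + 1) := by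
  have h := natCast_mul_monicSum c (d + 3)
  rw [hzero _ (Nat.le_add_left 3 d), mul_zero, sum_range_succ', sum_range_succ', sum_range_succ',
    sum_eq_zero fun m _ => by rw [hzero _ (by lia), zero_mul]] at h
  simp only [zero_add, monicSum_zero, monicSum_one, Nat.reduceAdd, Nat.sub_zero,
    Nat.reduceSubDiff] at h
  linear_combination -h

theorem map_primePowerSum_eq_neg_pow_add_pow {S : Type*} [CommRing S] (φ : R →+* S)
    {c : k[X] →* R} (hzero : ∀ d, 3 ≤ d → monicSum c d = 0) {β γ : S}
    (hadd : φ (primePowerSum c 1) = -(β + γ)) (hmul : φ (monicSum c 2) = β * γ) {r : ℕ}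
    (hr : 1 ≤ r) : φ (primePowerSum c r) = -(β ^ r + γ ^ r) := by
  have hpair (n : ℕ) : φ (primePowerSum c (n + 1)) = -(β ^ (n + 1) + γ ^ (n + 1)) ∧
      φ (primePowerSum c (n + 2)) = -(β ^ (n + 2) + γ ^ (n + 2)) := by
    induction n with
    | zero =>
      refine ⟨by simpa using hadd, ?_⟩
      simp only [zero_add, primePowerSum_two, map_sub, map_mul, map_pow, map_ofNat, hadd, hmul]
      ring
    | succ n ih =>
      refine ⟨ih.2, ?_⟩
      simp only [primePowerSum_add_three hzero, map_sub, map_mul, map_neg, hadd, hmul, ih]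
      ring
  obtain ⟨n, rfl⟩ := Nat.exists_eq_add_of_le' hr
  exact (hpair n).1

end EulerProduct

section FiniteFieldExtension

variable {k K : Type*} [Field k] [Field K] [Algebra k K]

theorem norm_algebraMap_sub_eq_eval_minpoly_pow [FiniteDimensional k K] (y : K) (t : k) :
    Algebra.norm k (algebraMap k K t - y) =
      (minpoly k y).eval t ^ (Module.finrank k K / (minpoly k y).natDegree) := by
  have hy := Algebra.IsIntegral.isIntegral (R := k) y
  let L := IntermediateField.adjoin k {y}
  let pb := IntermediateField.adjoin.powerBasis hy
  have hgen : algebraMap L K pb.gen = y := by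
    rw [IntermediateField.adjoin.powerBasis_gen]
    exact IntermediateField.AdjoinSimple.algebraMap_gen k y
  have hmin : minpoly k pb.gen = minpoly k y := by
    rw [← minpoly.algebraMap_eq (algebraMap L K).injective, hgen]
  have hnorm : Algebra.norm k (algebraMap k L t - pb.gen) = (minpoly k y).eval t := by
    rw [Algebra.norm_eq_matrix_det pb.basis, map_sub, AlgHom.commutes, ← hmin,
      ← charpoly_leftMulMatrix, Matrix.eval_charpoly]
    rfl
  have hlift : algebraMap k K t - y = algebraMap L K (algebraMap k L t - pb.gen) := by
    rw [map_sub, hgen, ← IsScalarTower.algebraMap_apply]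
  rw [hlift, ← Algebra.norm_norm (S := L), Algebra.norm_algebraMap, map_pow, hnorm,
    ← Module.finrank_mul_finrank k L K, IntermediateField.adjoin.finrank hy,
    Nat.mul_div_cancel_left _ (minpoly.natDegree_pos hy)]

variable [Finite k] [Fintype K]

theorem card_filter_minpoly_eq [DecidableEq k[X]] {P : k[X]} (hmon : P.Monic) (hirr : Irreducible P)
    (hdvd : P.natDegree ∣ Module.finrank k K) : #{y : K | minpoly k y = P} = P.natDegree := by
  have hsplit : (P.map (algebraMap k K)).Splits := by
    have hP : P ∣ X ^ Nat.card K - X := by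
      rwa [Module.natCard_eq_pow_finrank (K := k) (V := K),
        ← hirr.natDegree_dvd_iff_dvd_X_pow_card_pow_sub_X]
    have hmap := Polynomial.map_dvd (algebraMap k K) hP
    simp only [Polynomial.map_sub, Polynomial.map_pow, map_X] at hmap
    refine splits_X_pow_nat_card_sub_X.of_dvd ?_ hmap
    rw [Nat.card_eq_fintype_card]
    exact FiniteField.X_pow_card_sub_X_ne_zero K Fintype.one_lt_card
  rw [← card_rootSet_eq_natDegree (PerfectField.separable_of_irreducible hirr) hsplit,
    ← Set.toFinset_card]
  congr 1
  ext y
  simp only [mem_filter, mem_univ, true_and, Set.mem_toFinset, mem_rootSet]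
  exact ⟨by rintro rfl; exact ⟨hmon.ne_zero, minpoly.aeval k y⟩,
    fun h => (minpoly.eq_of_irreducible_of_monic hirr h.2 hmon).symm⟩

theorem sum_minpoly {M : Type*} [AddCommMonoid M] (f : k[X] → ℕ → M) :
    ∑ y : K, f (minpoly k y) (Module.finrank k K / (minpoly k y).natDegree) =
      ∑ x ∈ primePowerFinset k (Module.finrank k K), x.1.natDegree • f x.1 x.2 := by
  classical
  have hy (y : K) : IsIntegral k y := Algebra.IsIntegral.isIntegral y
  have hmem (y : K) (_ : y ∈ univ) :
      (minpoly k y, Module.finrank k K / (minpoly k y).natDegree) ∈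
        primePowerFinset k (Module.finrank k K) := by
    have hdvd := minpoly.degree_dvd (K := k) (L := K) (hy y)
    refine mem_primePowerFinset.2 ⟨minpoly.monic (hy y), minpoly.irreducible (hy y), ?_,
      Nat.div_mul_cancel hdvd⟩
    exact (Nat.div_pos (Nat.le_of_dvd Module.finrank_pos hdvd) (minpoly.natDegree_pos (hy y))).ne'
  rw [← sum_fiberwise_of_maps_to hmem]
  refine sum_congr rfl fun x hx => ?_
  obtain ⟨hmon, hirr, _, hdeg⟩ := mem_primePowerFinset.1 hx
  have hfiber (y : K) :
      (minpoly k y, Module.finrank k K / (minpoly k y).natDegree) = x ↔ minpoly k y = x.1 := by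
    refine ⟨fun h => congrArg Prod.fst h, fun h => Prod.ext h ?_⟩
    rw [h, ← hdeg, Nat.mul_div_cancel _ hirr.natDegree_pos]
  rw [← card_filter_minpoly_eq (K := K) hmon hirr (Dvd.intro_left _ hdeg), ← sum_const]
  simp only [hfiber]
  refine sum_congr rfl fun y h => ?_
  rw [(mem_filter.1 h).2, ← hdeg, Nat.mul_div_cancel _ hirr.natDegree_pos]

end FiniteFieldExtension

section QuadraticCharacter

variable {k : Type*} [Field k] [Fintype k] [DecidableEq k]

theorem quadraticChar_eq_quadraticChar_norm {K : Type*} [Field K] [Fintype K] [DecidableEq K]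
    [Algebra k K] (hk : ringChar k ≠ 2) (z : K) :
    quadraticChar K z = quadraticChar k (Algebra.norm k z) := by
  have hK : ringChar K ≠ 2 := by rwa [← Algebra.ringChar_eq k K]
  obtain ⟨m, hm⟩ : Odd (Fintype.card k) := Nat.odd_iff.2 (FiniteField.odd_card_of_char_ne_two hk)
  have hpos : 0 < 2 * m := by
    have := Fintype.one_lt_card (α := k)
    lia
  obtain ⟨c, hc⟩ : Fintype.card k - 1 ∣ Fintype.card K - 1 := by
    rw [Module.card_eq_pow_finrank (K := k) (V := K)]
    exact Nat.sub_one_dvd_pow_sub_one _ _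
  have hexp : (Fintype.card K - 1) / (Fintype.card k - 1) * (Fintype.card k / 2) =
      Fintype.card K / 2 := by
    have hcard : Fintype.card K = 2 * (c * m) + 1 := by
      have := Fintype.card_pos (α := K)
      rw [hm, Nat.add_sub_cancel] at hc
      linarith [Nat.sub_add_cancel this]
    rw [hc, hm, hcard, Nat.add_sub_cancel, Nat.mul_div_cancel_left _ hpos,
      Nat.mul_add_div two_pos, Nat.mul_add_div two_pos, Nat.div_eq_of_lt one_lt_two, add_zero,
      add_zero]
  refine (quadraticChar_isQuadratic K).eq_of_eq_coe (quadraticChar_isQuadratic k) hK ?_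
  rw [← map_intCast (algebraMap k K) (quadraticChar k (Algebra.norm k z)),
    quadraticChar_eq_pow_of_char_ne_two' hK, quadraticChar_eq_pow_of_char_ne_two' hk, map_pow,
    FiniteField.algebraMap_norm_eq_pow, ← pow_mul, Nat.card_eq_fintype_card,
    Nat.card_eq_fintype_card, hexp]

theorem sum_quadraticChar_mul_self (u : k) :
    ∑ b : k, quadraticChar k ((b + u) * (b + u)) = Fintype.card k - 1 := by
  have hsq (b : k) (hb : b ∈ univ.erase 0) : quadraticChar k (b * b) = 1 := by
    rw [← sq, quadraticChar_sq_one' (ne_of_mem_erase hb)]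
  calc ∑ b : k, quadraticChar k ((b + u) * (b + u))
      = ∑ b : k, quadraticChar k (b * b) :=
        Equiv.sum_comp (Equiv.addRight u) fun b => quadraticChar k (b * b)
    _ = Fintype.card k - 1 := by
        rw [← sum_erase_add _ _ (mem_univ (0 : k)), mul_zero, MulChar.map_zero, add_zero,
          sum_congr rfl hsq, sum_const, card_erase_of_mem (mem_univ _), card_univ, nsmul_eq_mul,
          mul_one, Nat.cast_pred Fintype.card_pos]

theorem sum_quadraticChar_add_mul_add_of_ne (hk : ringChar k ≠ 2) {u w : k} (huw : u ≠ w) :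
    ∑ b : k, quadraticChar k ((b + u) * (b + w)) = -1 := by
  have hsub : u - w ≠ 0 := sub_ne_zero.2 huw
  have hfactor (x : k) :
      quadraticChar k (((u - w) * x - u + u) * ((u - w) * x - u + w)) =
        quadraticChar k (-1) * (quadraticChar k x * quadraticChar k (1 - x)) := by
    rw [show ((u - w) * x - u + u) * ((u - w) * x - u + w) =
      (u - w) ^ 2 * (-1 * (x * (1 - x))) by ring, map_mul, quadraticChar_sq_one' hsub, one_mul,
      map_mul, map_mul]
  have hjacobi := jacobiSum_nontrivial_inv (quadraticChar_ne_one hk)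
  rw [(quadraticChar_isQuadratic k).inv, jacobiSum] at hjacobi
  calc ∑ b : k, quadraticChar k ((b + u) * (b + w))
      = ∑ x : k, quadraticChar k (((u - w) * x - u + u) * ((u - w) * x - u + w)) :=
        (((Equiv.mulLeft₀ (u - w) hsub).trans (Equiv.subRight u)).sum_comp
          fun b => quadraticChar k ((b + u) * (b + w))).symm
    _ = -1 := by
        rw [sum_congr rfl fun x _ => hfactor x, ← mul_sum, hjacobi, mul_neg, ← sq,
          quadraticChar_sq_one (neg_ne_zero.2 one_ne_zero)]

theorem sum_quadraticChar_add_mul_add (hk : ringChar k ≠ 2) (u w : k) :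
    ∑ b : k, quadraticChar k ((b + u) * (b + w)) =
      (if u = w then (Fintype.card k : ℤ) else 0) - 1 := by
  split_ifs with h
  · rw [h, sum_quadraticChar_mul_self]
  · rw [sum_quadraticChar_add_mul_add_of_ne hk h, zero_sub]

end QuadraticCharacter

section LegendreLFunction

variable {k : Type*} [Field k] [Fintype k] [DecidableEq k]

/-- The multiplicative function `g ↦ χ (g 0 * g 1 * g a)`, with `χ` the quadratic character, whose
`L`-function is the numerator of the zeta function of the Legendre curve of parameter `a`. -/
noncomputable def evalQuadraticChar (a : k) : k[X] →* ℤ :=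
  (quadraticChar k).toMonoidHom.comp
    ((evalRingHom 0 : k[X] →+* k) * (evalRingHom 1 : k[X] →+* k) * (evalRingHom a : k[X] →+* k) :
      k[X] →* k)

theorem evalQuadraticChar_apply (a : k) (g : k[X]) :
    evalQuadraticChar a g = quadraticChar k (g.eval 0 * g.eval 1 * g.eval a) :=
  rfl

theorem primePowerSum_evalQuadraticChar (hk : ringChar k ≠ 2) (a : k) (K : Type*) [Field K]
    [Fintype K] [DecidableEq K] [Algebra k K] :
    primePowerSum (evalQuadraticChar a) (Module.finrank k K) =
      ∑ y : K, quadraticChar K ((0 - y) * (1 - y) * (algebraMap k K a - y)) := by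
  have h := sum_minpoly (K := K) fun P e => evalQuadraticChar a P ^ e
  simp only [nsmul_eq_mul] at h
  rw [primePowerSum, ← h]
  refine sum_congr rfl fun y _ => ?_
  rw [quadraticChar_eq_quadraticChar_norm hk, evalQuadraticChar_apply, ← map_pow, mul_pow,
    mul_pow, ← norm_algebraMap_sub_eq_eval_minpoly_pow, ← norm_algebraMap_sub_eq_eval_minpoly_pow,
    ← norm_algebraMap_sub_eq_eval_minpoly_pow, ← map_mul, ← map_mul, map_zero, map_one]

theorem sum_monicFinset_two {k M : Type*} [Field k] [Fintype k] [AddCommMonoid M] (f : k[X] → M) :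
    ∑ g ∈ monicFinset k 2, f g = ∑ s : k, ∑ t : k, f (X ^ 2 + C t * X + C s) := by
  rw [← Fintype.sum_prod_type' fun s t => f (X ^ 2 + C t * X + C s)]
  symm
  refine sum_bij (fun v _ => X ^ 2 + C v.2 * X + C v.1) ?_ ?_ ?_ fun _ _ => rfl
  · intro v _
    exact mem_monicFinset.2 ⟨by monicity!, by compute_degree!⟩
  · intro v _ w _ hvw
    have hzero := congrArg (coeff · 0) hvw
    have hone := congrArg (coeff · 1) hvw
    exact Prod.ext (by simpa using hzero) (by simpa [coeff_X, coeff_C] using hone)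
  · intro g hg
    obtain ⟨hmon, hdeg⟩ := mem_monicFinset.1 hg
    refine ⟨(g.coeff 0, g.coeff 1), mem_univ _, ?_⟩
    have hlead : g.coeff 2 = 1 := hdeg ▸ hmon
    conv_rhs => rw [g.as_sum_range_C_mul_X_pow' (n := 3) (by lia)]
    simp only [sum_range_succ, sum_range_zero, hlead, map_one]
    ring

theorem monicSum_two_evalQuadraticChar (hk : ringChar k ≠ 2) {a : k} (h0 : a ≠ 0) (h1 : a ≠ 1) :
    monicSum (evalQuadraticChar a) 2 = Fintype.card k := by
  have hfactor (s t : k) : evalQuadraticChar a (X ^ 2 + C t * X + C s) =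
      quadraticChar k a * quadraticChar k s *
        quadraticChar k ((t + (1 + s)) * (t + (a + s / a))) := by
    rw [evalQuadraticChar_apply, ← map_mul, ← map_mul]
    congr 1
    simp only [eval_add, eval_mul, eval_pow, eval_X, eval_C]
    field_simp
    ring
  have hroot (s : k) : 1 + s = a + s / a ↔ s = a := by
    have hsub : 1 + s - (a + s / a) = (a - 1) / a * (s - a) := by
      field_simp
      ring
    rw [← sub_eq_zero, hsub, mul_eq_zero, div_eq_zero_iff, sub_eq_zero, sub_eq_zero]
    simp [h0, h1]
  rw [monicSum, sum_monicFinset_two]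
  calc ∑ s : k, ∑ t : k, evalQuadraticChar a (X ^ 2 + C t * X + C s)
      = ∑ s : k, quadraticChar k a * ((if s = a then quadraticChar k s * (Fintype.card k : ℤ)
          else 0) - quadraticChar k s) := by
        refine sum_congr rfl fun s _ => ?_
        simp only [hfactor, ← mul_sum, sum_quadraticChar_add_mul_add hk, hroot]
        split_ifs <;> ring
    _ = Fintype.card k := by
        rw [← mul_sum, sum_sub_distrib, quadraticChar_sum_zero hk, sum_ite_eq' univ a,
          if_pos (mem_univ _), sub_zero, ← mul_assoc, ← sq, quadraticChar_sq_one h0, one_mul]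

theorem add_mem_monicFinset {k : Type*} [Field k] [Finite k] {d : ℕ} {g h : k[X]}
    (hg : g ∈ monicFinset k d) (hh : h.degree < d) : g + h ∈ monicFinset k d := by
  obtain ⟨hmon, rfl⟩ := mem_monicFinset.1 hg
  rw [← degree_eq_natDegree hmon.ne_zero] at hh
  exact mem_monicFinset.2 ⟨hmon.add_of_left hh, natDegree_add_eq_left_of_degree_lt hh⟩

theorem sum_monicFinset_add {k M : Type*} [Field k] [Finite k] [AddCommMonoid M] {d : ℕ}
    (f : k[X] → M) {h : k[X]} (hh : h.degree < d) :
    ∑ g ∈ monicFinset k d, f (g + h) = ∑ g ∈ monicFinset k d, f g :=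
  sum_nbij' (· + h) (· - h) (fun _ hg => add_mem_monicFinset hg hh)
    (fun g hg => sub_eq_add_neg g h ▸ add_mem_monicFinset hg (degree_neg h ▸ hh))
    (fun _ _ => add_sub_cancel_right _ _) (fun _ _ => sub_add_cancel _ _) fun _ _ => rfl

theorem sum_evalQuadraticChar_add_C_mul (hk : ringChar k ≠ 2) {a : k} {h : k[X]}
    (h0 : h.eval 0 = 0) (h1 : h.eval 1 = 0) (ha : h.eval a ≠ 0) (g : k[X]) :
    ∑ t : k, evalQuadraticChar a (g + C t * h) = 0 := by
  simp only [evalQuadraticChar_apply, eval_add, eval_mul, eval_C, h0, h1, mul_zero, add_zero]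
  have hsum : ∑ t : k, quadraticChar k (g.eval a + t * h.eval a) = 0 :=
    (((Equiv.mulRight₀ (h.eval a) ha).trans (Equiv.addLeft (g.eval a))).sum_comp
      fun x => quadraticChar k x).trans (quadraticChar_sum_zero hk)
  simp only [map_mul (quadraticChar k), ← mul_sum, hsum, mul_zero]

theorem monicSum_evalQuadraticChar_eq_zero (hk : ringChar k ≠ 2) {a : k} (h0 : a ≠ 0) (h1 : a ≠ 1)
    {d : ℕ} (hd : 3 ≤ d) : monicSum (evalQuadraticChar a) d = 0 := by
  have hdeg (t : k) : (C t * (X * (X - 1)) : k[X]).degree < d := by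
    have hle : (C t * (X * (X - 1)) : k[X]).degree ≤ 2 := by compute_degree
    exact hle.trans_lt (by exact_mod_cast hd)
  have hzero : ∑ _t : k, monicSum (evalQuadraticChar a) d = 0 :=
    calc ∑ _t : k, monicSum (evalQuadraticChar a) d
        = ∑ t : k, ∑ g ∈ monicFinset k d, evalQuadraticChar a (g + C t * (X * (X - 1))) :=
          sum_congr rfl fun t _ => (sum_monicFinset_add _ (hdeg t)).symm
      _ = 0 := by
          rw [sum_comm]
          exact sum_eq_zero fun g _ => sum_evalQuadraticChar_add_C_mul hk (by simp) (by simp)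
            (by simp [h0, sub_ne_zero.2 h1]) g
  rw [sum_const, card_univ, nsmul_eq_mul] at hzero
  exact (mul_eq_zero.1 hzero).resolve_left (Nat.cast_ne_zero.2 Fintype.card_ne_zero)

end LegendreLFunction

section LegendreFamily

theorem coeff_one_add_X_mul_one_add_C_mul_X_pow {R : Type*} [CommRing R] (a : R) (m : ℕ) :
    (((1 + X) * (1 + C a * X) : R[X]) ^ m).coeff m =
      ∑ j ∈ range (m + 1), (m.choose j : R) ^ 2 * a ^ j := by
  have hcomp : (1 + C a * X : R[X]) ^ m = ((1 + X) ^ m).comp (C a * X) := by simp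
  rw [mul_pow, mul_comm, hcomp, coeff_mul, Nat.sum_antidiagonal_eq_sum_range_succ_mk]
  refine sum_congr rfl fun j hj => ?_
  rw [comp_C_mul_X_coeff, coeff_one_add_X_pow, coeff_one_add_X_pow,
    Nat.choose_symm (Nat.lt_succ_iff.1 (mem_range.1 hj))]
  ring

theorem natDegree_one_add_X_mul_one_add_C_mul_X_le {R : Type*} [CommRing R] (a : R) :
    ((1 + X) * (1 + C a * X) : R[X]).natDegree ≤ 2 := by
  compute_degree

theorem natDegree_prod_expand_pow_mul_le {R : Type*} [CommRing R] {p : ℕ} (hp : 1 ≤ p) (F : R[X])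
    (m r : ℕ) :
    (∏ i ∈ range r, expand R (p ^ i) (F ^ m)).natDegree * (p - 1) ≤
      m * F.natDegree * (p ^ r - 1) := by
  have hle : (∏ i ∈ range r, expand R (p ^ i) (F ^ m)).natDegree ≤
      ∑ i ∈ range r, m * F.natDegree * p ^ i := by
    refine (natDegree_prod_le _ _).trans (sum_le_sum fun i _ => ?_)
    rw [natDegree_expand]
    exact Nat.mul_le_mul_right _ natDegree_pow_le
  calc _ ≤ (∑ i ∈ range r, m * F.natDegree * p ^ i) * (p - 1) := Nat.mul_le_mul_right _ hle
    _ = m * F.natDegree * (p ^ r - 1) := by rw [← mul_sum, mul_assoc, geom_sum_mul_of_one_le hp]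

theorem natDegree_prod_expand_pow_half_lt {R : Type*} [CommRing R] {p : ℕ} (hp : Odd p)
    (hp1 : 1 < p) {F : R[X]} (hF : F.natDegree ≤ 2) (n : ℕ) {r : ℕ} (hr : r ≠ 0) :
    (∏ i ∈ range r, expand R (p ^ i) (F ^ ((p - 1) / 2 * p ^ n))).natDegree <
      (p ^ r - 1) * ((p ^ n - 1) / 2 * F.natDegree + 1) + (p ^ r - 1) / 2 := by
  obtain ⟨h, rfl⟩ := hp
  obtain ⟨k, hk⟩ : Odd ((2 * h + 1) ^ n) := (odd_two_mul_add_one h).pow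
  obtain ⟨q, hq⟩ : Odd ((2 * h + 1) ^ r) := (odd_two_mul_add_one h).pow
  have hqpos : 0 < q := by
    have := Nat.one_lt_pow hr hp1
    lia
  have hle := natDegree_prod_expand_pow_mul_le hp1.le F ((2 * h + 1 - 1) / 2 * (2 * h + 1) ^ n) r
  simp only [hk, hq, Nat.add_sub_cancel, Nat.mul_div_cancel_left _ two_pos] at hle ⊢
  refine lt_of_mul_lt_mul_right (hle.trans_lt ?_) (Nat.zero_le (2 * h))
  calc h * (2 * k + 1) * F.natDegree * (2 * q)
      = 2 * h * (2 * q * (k * F.natDegree) + q * F.natDegree) := by ring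
    _ < 2 * h * (2 * q * (k * F.natDegree + 1) + q) := by
        refine Nat.mul_lt_mul_of_pos_left ?_ (by lia)
        nlinarith [Nat.mul_le_mul_left q hF]
    _ = (2 * q * (k * F.natDegree + 1) + q) * (2 * h) := mul_comm _ _

/-- The substitution `y = -x⁻¹`, with `0` fixed as `0⁻¹ = 0`. -/
theorem sum_quadraticChar_mul_one_add_mul {K : Type*} [Field K] [Fintype K] [DecidableEq K]
    (a : K) : ∑ x : K, quadraticChar K (x * ((1 + x) * (1 + a * x))) =
      ∑ y : K, quadraticChar K ((0 - y) * (1 - y) * (a - y)) := by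
  rw [← ((Equiv.inv K).trans (Equiv.neg K)).sum_comp
    fun y => quadraticChar K ((0 - y) * (1 - y) * (a - y))]
  refine sum_congr rfl fun x _ => ?_
  rw [Equiv.trans_apply, Equiv.inv_apply, Equiv.neg_apply]
  by_cases hx : x = 0
  · simp [hx]
  · have hsubst : x * ((1 + x) * (1 + a * x)) =
        (x ^ 2) ^ 2 * ((0 - -x⁻¹) * (1 - -x⁻¹) * (a - -x⁻¹)) := by
      field_simp
      ring
    rw [hsubst, map_mul, quadraticChar_sq_one' (pow_ne_zero 2 hx), one_mul]

theorem dvd_sub_of_dvd_sub_one_mul_add {R : Type*} [CommRing R] {a t b c : R}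
    (h : a ∣ (a - 1) * t + (b + c)) (hc : a ∣ c) : a ∣ t - b := by
  rw [show t - b = a * t + c - ((a - 1) * t + (b + c)) by ring]
  exact dvd_sub (dvd_add (dvd_mul_right a t) hc) h

variable {p : ℕ} [Fact p.Prime]

theorem natCast_LCount (hp : p ≠ 2) (lam : ℤ_[p]) :
    (LCount p lam : ℤ) = p + 1 + ∑ x : ZMod p,
      quadraticChar (ZMod p) (x * (x - 1) * (x - PadicInt.toZMod lam)) := by
  have hsqrts (c : ZMod p) :
      ((#{y : ZMod p | y ^ 2 = c} : ℕ) : ℤ) = quadraticChar (ZMod p) c + 1 := by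
    rw [← quadraticChar_card_sqrts ((ZMod.ringChar_zmod_n p).trans_ne hp), Set.toFinset_ofPred]
  rw [LCount, card_filter, Fintype.sum_prod_type]
  simp only [← card_filter]
  push_cast
  simp only [hsqrts, sum_add_distrib, sum_const, card_univ, ZMod.card, nsmul_one]
  ring

theorem primePowerSum_one_legendre (hp : p ≠ 2) (lam : ℤ_[p]) :
    primePowerSum (evalQuadraticChar (PadicInt.toZMod lam)) 1 =
      -((-1) ^ ((p - 1) / 2) * (p + 1 - LCount p lam)) := by
  have hchar : ringChar (ZMod p) ≠ 2 := (ZMod.ringChar_zmod_n p).trans_ne hp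
  have hodd := (Fact.out : p.Prime).mod_two_eq_one_iff_ne_two.2 hp
  have hneg : quadraticChar (ZMod p) (-1) = (-1) ^ ((p - 1) / 2) := by
    rw [quadraticChar_neg_one hchar, ZMod.card, ZMod.χ₄_eq_neg_one_pow hodd,
      show p / 2 = (p - 1) / 2 by lia]
  have hsum := primePowerSum_evalQuadraticChar hchar (PadicInt.toZMod lam) (ZMod p)
  rw [Module.finrank_self] at hsum
  rw [hsum, natCast_LCount hp, ← hneg, sub_add_cancel_left, mul_neg, neg_neg, mul_sum]
  refine sum_congr rfl fun x _ => ?_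
  rw [← map_mul, Algebra.algebraMap_self_apply]
  congr 1
  ring

theorem sum_quadraticChar_legendre (hp : p ≠ 2) (lam : ℤ_[p]) (K : Type*) [Field K] [Fintype K]
    [DecidableEq K] [Algebra (ZMod p) K] :
    ∑ x : K, quadraticChar K (x * ((1 + X) * (1 + C lam * X) : ℤ_[p][X]).eval₂
        ((algebraMap (ZMod p) K).comp PadicInt.toZMod) x) =
      primePowerSum (evalQuadraticChar (PadicInt.toZMod lam)) (Module.finrank (ZMod p) K) := by
  rw [primePowerSum_evalQuadraticChar ((ZMod.ringChar_zmod_n p).trans_ne hp),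
    ← sum_quadraticChar_mul_one_add_mul]
  simp only [eval₂_mul, eval₂_add, eval₂_one, eval₂_X, eval₂_C, RingHom.comp_apply]

theorem primePowerSum_legendre (hp : p ≠ 2) {lam : ℤ_[p]} (h0 : PadicInt.toZMod lam ≠ 0)
    (h1 : PadicInt.toZMod lam ≠ 1) {R : Type*} [CommRing R] {β γ : R}
    (hadd : β + γ = ((-1) ^ ((p - 1) / 2) * (p + 1 - LCount p lam) : ℤ)) (hmul : β * γ = p)
    {r : ℕ} (hr : 1 ≤ r) :
    ((primePowerSum (evalQuadraticChar (PadicInt.toZMod lam)) r : ℤ) : R) = -(β ^ r + γ ^ r) := by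
  have hchar : ringChar (ZMod p) ≠ 2 := (ZMod.ringChar_zmod_n p).trans_ne hp
  refine map_primePowerSum_eq_neg_pow_add_pow (Int.castRingHom R)
    (fun d hd => monicSum_evalQuadraticChar_eq_zero hchar h0 h1 hd) ?_ ?_ hr
  · rw [primePowerSum_one_legendre hp, hadd, map_neg, eq_intCast]
  · rw [monicSum_two_evalQuadraticChar hchar h0 h1, ZMod.card, hmul, map_natCast]

theorem pow_dvd_sum_coeff_legendre_sub_pow (hp : p ≠ 2) {lam : ℤ_[p]}
    (h0 : PadicInt.toZMod lam ≠ 0) (h1 : PadicInt.toZMod lam ≠ 1) {β γ : ℤ_[p]}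
    (hadd : β + γ = ((-1) ^ ((p - 1) / 2) * (p + 1 - LCount p lam) : ℤ)) (hmul : β * γ = p)
    (hβ : IsUnit β) {F : ℤ_[p][X]} (hF : F = (1 + X) * (1 + C lam * X)) {n r : ℕ} (hr : 1 ≤ r)
    (hrn : r ≤ n + 1) :
    (p : ℤ_[p]) ^ r ∣ (∑ j ∈ range ((p ^ n - 1) / 2 * F.natDegree + 1),
      (∏ i ∈ range r, expand _ (p ^ i) (F ^ ((p - 1) / 2 * p ^ n))).coeff
        ((p ^ r - 1) * j + (p ^ r - 1) / 2)) - β ^ r := by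
  classical
  have hpp : p.Prime := Fact.out
  have hr0 : r ≠ 0 := Nat.one_le_iff_ne_zero.1 hr
  let K := GaloisField p r
  let := Fintype.ofFinite K
  have hcard : Fintype.card K = p ^ r := by
    rw [← Nat.card_eq_fintype_card]
    exact GaloisField.card p r hr0
  have hdeg : F.natDegree ≤ 2 := hF ▸ natDegree_one_add_X_mul_one_add_C_mul_X_le lam
  have htrace := pow_dvd_sum_coeff_sub_quadraticChar hp hcard
    ((algebraMap (ZMod p) K).comp PadicInt.toZMod) F n
    (natDegree_prod_expand_pow_half_lt (hpp.odd_of_ne_two hp) hpp.one_lt hdeg n hr0)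
  have hcharSum := sum_quadraticChar_legendre hp lam K
  rw [← hF, GaloisField.finrank p hr0] at hcharSum
  rw [hcharSum, primePowerSum_legendre hp h0 h1 hadd hmul hr,
    Nat.cast_pred (pow_pos hpp.pos r), Nat.cast_pow, sub_neg_eq_add] at htrace
  have hγ : (p : ℤ_[p]) ^ r ∣ γ ^ r := pow_dvd_pow_of_dvd (hmul ▸ hβ.mul_left_dvd.2 dvd_rfl) r
  exact dvd_sub_of_dvd_sub_one_mul_add ((pow_dvd_pow _ hrn).trans htrace) hγ

end LegendreFamily

theorem stmt12 (p : ℕ) [Fact p.Prime] (hp : Odd p) (lam : ℤ_[p])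
    (h0 : PadicInt.toZMod lam ≠ 0) (h1 : PadicInt.toZMod lam ≠ 1)
    (A : ℤ) (hA : A = (p : ℤ) + 1 - LCount p lam) (hord : ¬ (p : ℤ) ∣ A)
    (β : ℤ_[p]) (hβ : ‖β‖ = 1) (hroot : β ^ 2 - (A : ℤ_[p]) * β + (p : ℤ_[p]) = 0) :
    ∀ s : ℕ, 1 ≤ s →
      (p : ℤ_[p]) ^ s ∣
        ((∑ j ∈ range ((p ^ s - 1) / 2 + 1),
              (Nat.choose ((p ^ s - 1) / 2) j : ℤ_[p]) ^ 2 * lam ^ j)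
          - (-1) ^ ((p - 1) / 2) * β *
              ∑ j ∈ range ((p ^ (s - 1) - 1) / 2 + 1),
                (Nat.choose ((p ^ (s - 1) - 1) / 2) j : ℤ_[p]) ^ 2 * lam ^ j) := by
  intro s hs
  obtain ⟨n, rfl⟩ := Nat.exists_eq_add_of_le' hs
  obtain ⟨ε, hε⟩ : ∃ ε : ℤ_[p], ε = (-1) ^ ((p - 1) / 2) := ⟨_, rfl⟩
  have hsq : ε ^ 2 = 1 := by rw [hε, ← pow_mul, mul_comm, pow_mul, neg_one_sq, one_pow]
  have hunit : IsUnit (ε * β) := (hε ▸ isUnit_one.neg.pow _).mul (PadicInt.isUnit_iff.2 hβ)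
  have hadd : ε * β + ε * (A - β) = ((-1) ^ ((p - 1) / 2) * (p + 1 - LCount p lam) : ℤ) := by
    rw [← hA, hε]
    push_cast
    ring
  have hmul : ε * β * (ε * (A - β)) = p := by linear_combination (A * β - β ^ 2) * hsq - hroot
  have hcongr := dwork_congr_of_sum_coeff hp (F := (1 + X) * (1 + C lam * X)) (n := n)
    ((natDegree_one_add_X_mul_one_add_C_mul_X_le lam).trans (by lia))
    (by simp [mul_coeff_zero]) hunit fun r hr hrn =>
      pow_dvd_sum_coeff_legendre_sub_pow (hp.ne_two_of_dvd_nat dvd_rfl) h0 h1 hadd hmul hunit rfl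
        hr hrn
  rwa [coeff_one_add_X_mul_one_add_C_mul_X_pow, coeff_one_add_X_mul_one_add_C_mul_X_pow, hε]
    at hcongr
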